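/- arXiv:math/0303024 — 2 statements merged into one kernel-verified Lean document; each statement's English description precedes it below -/
import Mathlib

section
/- Let P₁ and P₂ be two commuting operators (P₁∘P₂ = P₂∘P₁) on the same complex Banach space B, each as in the context. For h ∈ C_0^∞(ℝ²) with special almost holomorphic extension H, write I(H) = (1/π²)∫_ℂ∫_ℂ (∂²H/∂z̄₁∂z̄₂)(z₁,z₂)·(z₁·1 − P₁)⁻¹(z₂·1 − P₂)⁻¹ L(dz₁) L(dz₂). If f, g ∈ C_0^∞(ℝ²) have special almost holomorphic extensions F, G, and H is any special almost holomorphic extension of the pointwise product fg, then I(F) ∘ I(G) = I(H). -/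
open MeasureTheory Complex Real

noncomputable section

/-- `∂F/∂z̄₁` for `F : ℂ² → ℂ`. -/
def dbar1 (F : ℂ × ℂ → ℂ) (z : ℂ × ℂ) : ℂ :=
  (fderiv ℝ F z (1, 0) + Complex.I * fderiv ℝ F z (Complex.I, 0)) / 2

/-- `∂F/∂z̄₂` for `F : ℂ² → ℂ`. -/
def dbar2 (F : ℂ × ℂ → ℂ) (z : ℂ × ℂ) : ℂ :=
  (fderiv ℝ F z (0, 1) + Complex.I * fderiv ℝ F z (0, Complex.I)) / 2

/-- `∂²F/∂z̄₁∂z̄₂` for `F : ℂ² → ℂ`. -/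
def dbar12 (F : ℂ × ℂ → ℂ) (z : ℂ × ℂ) : ℂ := dbar1 (fun w => dbar2 F w) z

/-- `F` is a special almost holomorphic extension of `f ∈ C_0^∞(ℝ²)`. -/
def IsSpecialAHExt2 (f : ℝ × ℝ → ℂ) (F : ℂ × ℂ → ℂ) : Prop :=
  ContDiff ℝ (⊤ : ℕ∞) F ∧ HasCompactSupport F ∧
    (∀ x y : ℝ, F (x, y) = f (x, y)) ∧
    ∀ N : ℕ, ∃ C : ℝ, ∀ z : ℂ × ℂ,
      ‖dbar1 F z‖ ≤ C * |z.1.im| ^ N ∧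
      ‖dbar2 F z‖ ≤ C * |z.2.im| ^ N ∧
      ‖dbar12 F z‖ ≤ C * (|z.1.im| * |z.2.im|) ^ N

/-- The resolvent `(z·1 − P)⁻¹` (equal to `0` when `z·1 − P` is not invertible). -/
def res {B : Type*} [NormedAddCommGroup B] [NormedSpace ℂ B] (P : B →L[ℂ] B) (z : ℂ) :
    B →L[ℂ] B := Ring.inverse (z • (1 : B →L[ℂ] B) - P)

/-- The spectrum of `P` is real. -/
def RealSpectrum {B : Type*} [NormedAddCommGroup B] [NormedSpace ℂ B]
    (P : B →L[ℂ] B) : Prop := ∀ z ∈ spectrum ℂ P, z.im = 0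

/-- The resolvent of `P` has locally temperate growth near `ℝ`. -/
def TemperateResolventLoc {B : Type*} [NormedAddCommGroup B] [NormedSpace ℂ B]
    (P : B →L[ℂ] B) : Prop :=
  ∀ R > (0:ℝ), ∃ C N : ℝ, 0 ≤ C ∧ 0 ≤ N ∧ ∀ z : ℂ, z.im ≠ 0 → ‖z‖ ≤ R →
    ‖res P z‖ ≤ C * |z.im| ^ (-N)

/-- The two-operator functional calculus `I(H)` applied to a special almost
holomorphic extension `H`. -/
def calc2 {B : Type*} [NormedAddCommGroup B] [NormedSpace ℂ B] [CompleteSpace B]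
    (P₁ P₂ : B →L[ℂ] B) (H : ℂ × ℂ → ℂ) : B →L[ℂ] B :=
  ((1/(π:ℂ)^2)) • ∫ z : ℂ × ℂ, dbar12 H z • (res P₁ z.1 * res P₂ z.2)

/-!
By the Cauchy–Pompeiu formula the Cauchy transform `C` inverts `∂/∂z̄` on compactly supported
functions. In the product of two integrals `-π⁻¹ ∫ α(z) R(z) L(dz)` and `-π⁻¹ ∫ β(w) R(w) L(dw)`,
the resolvent equation replaces `R(z) R(w)` by `(R(z) - R(w)) / (w - z)`. Integrating out the
Cauchy kernel leaves the integral with density `α · Cβ + Cα · β`, which for `α = ∂a/∂z̄` and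
`β = ∂b/∂z̄` is `∂(ab)/∂z̄` by the Leibniz rule. In two variables, integrating
`∂²F/∂z̄₁∂z̄₂` against `R₁` in `z₁` gives an operator valued density in `z₂` commuting with `R₂`, so
the one-variable formula applies first in `z₂` and then in `z₁`, and the product of the integrals of
`F` and `G` is that of `F G`.

The integral depends only on the values of the extension on the real axis. Suppose `Cα` has compact
support and vanishes on `ℝ`. Since `α` is flat on `ℝ`, so is `Cα`, hence `Cα · R - C(α R)` is
differentiable at real points. Off the real axis the resolvent equation identifies it with `R`
multiplied by the constant `-π⁻¹ ∫ α R`, which is holomorphic. It is therefore entire and tends to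
`0` at infinity, so `C(α R) = Cα · R` by Liouville's theorem. As this has compact support, the
leading coefficient `∫ α R` of `C(α R)` at infinity is zero.
-/

open Filter Set Asymptotics
open scoped Topology ComplexConjugate

section Dbar

variable {X Y E : Type*} [NormedAddCommGroup X] [NormedSpace ℂ X] [NormedAddCommGroup Y]
  [NormedSpace ℂ Y] [NormedAddCommGroup E] [NormedSpace ℂ E]

/-- The Wirtinger derivative `∂̄` in the complex direction `e`. Taking `e = 1` gives `∂/∂z̄` on `ℂ`,
taking `e = (1, 0)` or `e = (0, 1)` gives `∂/∂z̄₁` or `∂/∂z̄₂` on `ℂ × ℂ`. -/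
def dbarDir (e : X) (F : X → E) (x : X) : E :=
  (2⁻¹ : ℂ) • (fderiv ℝ F x e + I • fderiv ℝ F x (I • e))

lemma dbar1_eq_dbarDir (F : ℂ × ℂ → ℂ) : dbar1 F = dbarDir (1, 0) F := by
  ext z
  simp [dbar1, dbarDir, div_eq_inv_mul]

lemma dbar2_eq_dbarDir (F : ℂ × ℂ → ℂ) : dbar2 F = dbarDir (0, 1) F := by
  ext z
  simp [dbar2, dbarDir, div_eq_inv_mul]

lemma dbar12_eq_dbarDir (F : ℂ × ℂ → ℂ) : dbar12 F = dbarDir (1, 0) (dbarDir (0, 1) F) := by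
  ext z
  rw [dbar12, dbar2_eq_dbarDir, dbar1_eq_dbarDir]

lemma dbarDir_smul_direction (u : ℂ) (e : X) (F : X → E) (x : X) :
    dbarDir (u • e) F x = conj u • dbarDir e F x := by
  have hu : u • e = u.re • e + u.im • (I • e) := by
    rw [← Complex.coe_smul, ← Complex.coe_smul, smul_smul, ← add_smul, Complex.re_add_im]
  have hIu : I • u • e = -(u.im • e) + u.re • (I • e) := by
    rw [hu, smul_add, smul_comm I u.im, smul_smul I I, Complex.I_mul_I, smul_comm I u.re]
    module
  have hconj : conj u = (u.re : ℂ) - u.im * I := by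
    apply Complex.ext <;> simp
  rw [dbarDir, dbarDir, hIu, hu, hconj]
  simp only [map_add, map_neg, map_smul]
  simp only [← Complex.coe_smul]
  match_scalars
  · ring
  · linear_combination ((u.im : ℂ) / 2) * Complex.I_sq

lemma dbarDir_add {F G : X → E} {x : X} (e : X) (hF : DifferentiableAt ℝ F x)
    (hG : DifferentiableAt ℝ G x) :
    dbarDir e (fun y => F y + G y) x = dbarDir e F x + dbarDir e G x := by
  rw [dbarDir, dbarDir, dbarDir, fderiv_fun_add hF hG]
  simp only [add_apply]
  module

lemma dbarDir_smul {φ : X → ℂ} {F : X → E} {x : X} (e : X) (hφ : DifferentiableAt ℝ φ x)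
    (hF : DifferentiableAt ℝ F x) :
    dbarDir e (fun y => φ y • F y) x = dbarDir e φ x • F x + φ x • dbarDir e F x := by
  rw [dbarDir, dbarDir, dbarDir, fderiv_fun_smul hφ hF]
  simp only [add_apply, smul_apply,
    ContinuousLinearMap.smulRight_apply, smul_eq_mul]
  module

lemma dbarDir_comp_add_clm {F : Y → E} (L : X →L[ℂ] Y) (c : Y) (e : X) {x : X}
    (hF : DifferentiableAt ℝ F (c + L x)) :
    dbarDir e (fun x => F (c + L x)) x = dbarDir (L e) F (c + L x) := by
  have h : HasFDerivAt (fun x => F (c + L x))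
      ((fderiv ℝ F (c + L x)).comp (L.restrictScalars ℝ)) x :=
    hF.hasFDerivAt.comp x ((L.restrictScalars ℝ).hasFDerivAt.const_add c)
  rw [dbarDir, h.fderiv]
  simp [dbarDir]

lemma dbarDir_slice_left {F : ℂ × ℂ → E} (hF : Differentiable ℝ F) (z w : ℂ) :
    dbarDir 1 (fun z => F (z, w)) z = dbarDir (1, 0) F (z, w) := by
  simpa using dbarDir_comp_add_clm (ContinuousLinearMap.inl ℂ ℂ ℂ) (0, w) 1 (x := z) (hF _)

lemma dbarDir_slice_right {F : ℂ × ℂ → E} (hF : Differentiable ℝ F) (z w : ℂ) :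
    dbarDir 1 (fun w => F (z, w)) w = dbarDir (0, 1) F (z, w) := by
  simpa using dbarDir_comp_add_clm (ContinuousLinearMap.inr ℂ ℂ ℂ) (z, 0) 1 (x := w) (hF _)

lemma contDiff_dbarDir {F : X → E} {m n : WithTop ℕ∞} (hF : ContDiff ℝ n F) (hmn : m + 1 ≤ n)
    (e : X) : ContDiff ℝ m (dbarDir e F) :=
  (((hF.fderiv_right hmn).clm_apply contDiff_const).add
    (((hF.fderiv_right hmn).clm_apply contDiff_const).const_smul I)).const_smul (2⁻¹ : ℂ)

lemma hasCompactSupport_dbarDir {F : X → E} (hF : HasCompactSupport F) (e : X) :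
    HasCompactSupport (dbarDir e F) := by
  refine hF.mono' fun x hx => ?_
  contrapose! hx
  simp [dbarDir, fderiv_of_notMem_tsupport ℝ hx]

lemma dbarDir_comm {F : X → E} (hF : ContDiff ℝ 2 F) (e e' : X) :
    dbarDir e (dbarDir e' F) = dbarDir e' (dbarDir e F) := by
  ext x
  have hsymm : IsSymmSndFDerivAt ℝ F x := hF.contDiffAt.isSymmSndFDerivAt (by simp)
  have hdiff : DifferentiableAt ℝ (fderiv ℝ F) x :=
    (hF.fderiv_right (m := 1) (by norm_num)).differentiable one_ne_zero x
  have hder (a v : X) : fderiv ℝ (dbarDir a F) x v =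
      (2⁻¹ : ℂ) • (fderiv ℝ (fderiv ℝ F) x v a + I • fderiv ℝ (fderiv ℝ F) x v (I • a)) := by
    have h (b : X) : HasFDerivAt (fun y => fderiv ℝ F y b) ((fderiv ℝ (fderiv ℝ F) x).flip b) x :=
      by simpa using hdiff.hasFDerivAt.clm_apply (hasFDerivAt_const b x)
    have := (((h a).add ((h (I • a)).const_smul I)).const_smul (2⁻¹ : ℂ)).fderiv
    exact congrArg (fun T : X →L[ℝ] E => T v) this
  rw [dbarDir, dbarDir, hder, hder, hder, hder, hsymm.eq e e', hsymm.eq e (I • e'),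
    hsymm.eq (I • e) e', hsymm.eq (I • e) (I • e')]
  module

end Dbar

section CauchyPompeiu

variable {E : Type*} [NormedAddCommGroup E]

lemma integrableOn_polarCoord_target {g : ℝ × ℝ → E} (hg : Continuous g) {M : ℝ}
    (hM : ∀ p : ℝ × ℝ, M < p.1 → g p = 0) : IntegrableOn g polarCoord.target := by
  have hrect : IntegrableOn g (Icc 0 M ×ˢ Icc (-π) π) :=
    hg.continuousOn.integrableOn_compact (isCompact_Icc.prod isCompact_Icc)
  refine hrect.of_forall_sdiff_eq_zero (measurableSet_Ioi.prod measurableSet_Ioo) ?_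
  rintro ⟨r, θ⟩ ⟨⟨hr, hθ⟩, hnot⟩
  refine hM _ (not_le.1 fun hle => hnot ⟨⟨le_of_lt hr, hle⟩, Ioo_subset_Icc_self hθ⟩)

variable [NormedSpace ℂ E]

/-- The Cauchy transform `-π⁻¹ ∫ α(w) / (w - z) L(dw)`, normalised so as to invert `∂/∂z̄` on
compactly supported functions. -/
def cauchyTransform (α : ℂ → E) (z : ℂ) : E := (-(π : ℂ)⁻¹) • ∫ w, (w - z)⁻¹ • α w

lemma integrableOn_fderiv_polar {b : ℂ → E} (hb : ContDiff ℝ 1 b) (hb₀ : HasCompactSupport b)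
    {v : ℝ → ℂ} (hv : Continuous v) :
    IntegrableOn (fun p : ℝ × ℝ => fderiv ℝ b (p.1 • cexp (p.2 * I)) (v p.2))
      polarCoord.target := by
  have hfderiv : Continuous fun p : ℝ × ℝ => fderiv ℝ b (p.1 • cexp (p.2 * I)) :=
    (hb.continuous_fderiv one_ne_zero).comp (by fun_prop)
  obtain ⟨M, hM⟩ := (hb₀.fderiv ℝ).isCompact.isBounded.exists_norm_le
  refine integrableOn_polarCoord_target (hfderiv.clm_apply (by fun_prop)) (M := M) fun p hp => ?_
  have hnot : p.1 • cexp (p.2 * I) ∉ tsupport (fderiv ℝ b) := fun hmem => by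
    have := hM _ hmem
    rw [norm_smul, Complex.norm_exp_ofReal_mul_I, mul_one] at this
    exact absurd (hp.trans_le (le_abs_self p.1)) (not_lt.2 this)
  rw [image_eq_zero_of_notMem_tsupport hnot, zero_apply]

lemma smul_inv_smul_dbarDir_polar (b : ℂ → E) {r : ℝ} (hr : r ≠ 0) (θ : ℝ) :
    r • (r • cexp (θ * I))⁻¹ • dbarDir 1 b (r • cexp (θ * I)) =
      dbarDir (cexp (θ * I)) b (r • cexp (θ * I)) := by
  have hconj : conj (cexp (θ * I)) = (cexp (θ * I))⁻¹ := by
    rw [← Complex.exp_conj, ← Complex.exp_neg]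
    simp
  have hrot := dbarDir_smul_direction (cexp (θ * I)) 1 b (r • cexp (θ * I))
  rw [smul_eq_mul, mul_one, hconj] at hrot
  rw [hrot, Complex.real_smul, mul_inv, mul_smul, ← Complex.coe_smul,
    smul_inv_smul₀ (Complex.ofReal_ne_zero.2 hr)]

variable [CompleteSpace E]

lemma integral_Ioi_fderiv_ray {b : ℂ → E} (hb : ContDiff ℝ 1 b) (hb₀ : HasCompactSupport b)
    {u : ℂ} (hu : u ≠ 0) : ∫ r in Ioi (0 : ℝ), fderiv ℝ b (r • u) u = -b 0 := by
  have hderiv (r : ℝ) : deriv (fun r : ℝ => b (r • u)) r = fderiv ℝ b (r • u) u := by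
    have hray : HasDerivAt (fun r : ℝ => r • u) u r := by
      simpa using (hasDerivAt_id r).smul_const u
    exact ((hb.differentiable one_ne_zero _).hasFDerivAt.comp_hasDerivAt r hray).deriv
  have hsupp : HasCompactSupport fun r : ℝ => b (r • u) :=
    hb₀.comp_isClosedEmbedding (isClosedEmbedding_smul_left hu)
  have hsmooth : ContDiff ℝ 1 fun r : ℝ => b (r • u) :=
    hb.comp (contDiff_id.smul contDiff_const)
  simp only [← hderiv]
  rw [hsupp.integral_Ioi_deriv_eq hsmooth, zero_smul]

lemma integral_Ioo_fderiv_circle {b : ℂ → E} (hb : ContDiff ℝ 1 b) {r : ℝ} (hr : r ≠ 0) :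
    ∫ θ in Ioo (-π) π, fderiv ℝ b (r • cexp (θ * I)) (I • cexp (θ * I)) = 0 := by
  have hcircle (θ : ℝ) :
      HasDerivAt (fun θ : ℝ => r • cexp (θ * I)) (r • I • cexp (θ * I)) θ := by
    simpa [mul_comm I] using
      ((Complex.ofRealCLM.hasDerivAt (x := θ)).mul_const I).cexp.fun_const_smul r
  have hderiv (θ : ℝ) : HasDerivAt (fun θ : ℝ => r⁻¹ • b (r • cexp (θ * I)))
      (fderiv ℝ b (r • cexp (θ * I)) (I • cexp (θ * I))) θ := by
    have h := ((hb.differentiable one_ne_zero _).hasFDerivAt.comp_hasDerivAt θ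
      (hcircle θ)).fun_const_smul r⁻¹
    rwa [map_smul, inv_smul_smul₀ hr] at h
  have hcont : Continuous fun θ : ℝ => fderiv ℝ b (r • cexp (θ * I)) (I • cexp (θ * I)) :=
    ((hb.continuous_fderiv one_ne_zero).comp (by fun_prop)).clm_apply (by fun_prop)
  rw [← integral_Ioc_eq_integral_Ioo,
    ← intervalIntegral.integral_of_le (by linarith [Real.pi_pos] : -π ≤ π),
    intervalIntegral.integral_eq_sub_of_hasDerivAt (fun θ _ => hderiv θ)
      (hcont.intervalIntegrable _ _)]
  simp [Complex.exp_neg]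

lemma integral_polarCoord_target_fderiv_radial {b : ℂ → E} (hb : ContDiff ℝ 1 b)
    (hb₀ : HasCompactSupport b) :
    ∫ p in polarCoord.target, fderiv ℝ b (p.1 • cexp (p.2 * I)) (cexp (p.2 * I)) =
      (-(2 * π : ℂ)) • b 0 := by
  have h_int := integrableOn_fderiv_polar hb hb₀ (v := fun θ => cexp (θ * I)) (by fun_prop)
  rw [polarCoord_target, Measure.volume_eq_prod, IntegrableOn, ← Measure.prod_restrict] at h_int
  rw [polarCoord_target, Measure.volume_eq_prod, ← Measure.prod_restrict,
    integral_prod_symm _ h_int]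
  simp only [integral_Ioi_fderiv_ray hb hb₀ (Complex.exp_ne_zero _)]
  simp [Real.pi_pos.le, ← Complex.coe_smul, two_mul, add_smul]

lemma integral_polarCoord_target_fderiv_angular {b : ℂ → E} (hb : ContDiff ℝ 1 b)
    (hb₀ : HasCompactSupport b) :
    ∫ p in polarCoord.target, fderiv ℝ b (p.1 • cexp (p.2 * I)) (I • cexp (p.2 * I)) = 0 := by
  have h_int := integrableOn_fderiv_polar hb hb₀ (v := fun θ => I • cexp (θ * I)) (by fun_prop)
  rw [polarCoord_target, Measure.volume_eq_prod, IntegrableOn, ← Measure.prod_restrict] at h_int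
  rw [polarCoord_target, Measure.volume_eq_prod, ← Measure.prod_restrict, integral_prod _ h_int]
  exact setIntegral_eq_zero_of_forall_eq_zero fun r hr =>
    integral_Ioo_fderiv_circle hb (ne_of_gt hr)

-- The Jacobian `r` cancels the singularity of `w⁻¹`, and the remaining phase `e^{-iθ}` turns
-- `∂/∂z̄` into `∂̄` along `e^{iθ}`, whose radial part integrates to a boundary term at `0` and
-- whose angular part integrates to zero over circles.
lemma integral_inv_smul_dbarDir {b : ℂ → E} (hb : ContDiff ℝ 1 b) (hb₀ : HasCompactSupport b) :
    ∫ w, w⁻¹ • dbarDir 1 b w = (-(π : ℂ)) • b 0 := by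
  have hradial := integrableOn_fderiv_polar hb hb₀ (v := fun θ => cexp (θ * I)) (by fun_prop)
  have hangular :=
    integrableOn_fderiv_polar hb hb₀ (v := fun θ => I • cexp (θ * I)) (by fun_prop)
  calc ∫ w, w⁻¹ • dbarDir 1 b w
      = ∫ p in polarCoord.target, p.1 • (p.1 • cexp (p.2 * I))⁻¹ •
          dbarDir 1 b (p.1 • cexp (p.2 * I)) := by
        rw [← Complex.integral_comp_polarCoord_symm]
        simp only [Complex.polarCoord_symm_apply, Complex.exp_mul_I, Complex.real_smul,
          Complex.ofReal_cos, Complex.ofReal_sin]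
    _ = ∫ p in polarCoord.target, dbarDir (cexp (p.2 * I)) b (p.1 • cexp (p.2 * I)) :=
        setIntegral_congr_fun (measurableSet_Ioi.prod measurableSet_Ioo) fun p hp =>
          smul_inv_smul_dbarDir_polar b (ne_of_gt hp.1) p.2
    _ = (-(π : ℂ)) • b 0 := by
        simp only [dbarDir]
        rw [integral_smul, integral_add hradial (hangular.fun_smul I), integral_smul,
          integral_polarCoord_target_fderiv_radial hb hb₀,
          integral_polarCoord_target_fderiv_angular hb hb₀]
        module

theorem cauchyTransform_dbarDir {b : ℂ → E} (hb : ContDiff ℝ 1 b) (hb₀ : HasCompactSupport b) :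
    cauchyTransform (dbarDir 1 b) = b := by
  ext z
  have hshift (w : ℂ) : dbarDir 1 (fun w => b (z + w)) w = dbarDir 1 b (z + w) := by
    simpa using dbarDir_comp_add_clm (ContinuousLinearMap.id ℂ ℂ) z 1 (x := w)
      (hb.differentiable one_ne_zero _)
  have h := integral_inv_smul_dbarDir (b := fun w => b (z + w))
    (hb.comp (contDiff_const.add contDiff_id)) (hb₀.comp_homeomorph (Homeomorph.addLeft z))
  rw [cauchyTransform, ← integral_add_left_eq_self _ z]
  simp only [add_sub_cancel_left, ← hshift, h, add_zero, smul_smul]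
  simp [Real.pi_ne_zero]

end CauchyPompeiu

section FlatFunctions

variable {X Y E : Type*} [TopologicalSpace X] [TopologicalSpace Y] [NormedAddCommGroup E]
  {V W : X → ℝ}

/-- A continuous compactly supported function vanishing to infinite order on the zero set of the
weight `W`. -/
structure IsFlatAlong (W : X → ℝ) (u : X → E) : Prop where
  continuous : Continuous u
  hasCompactSupport : HasCompactSupport u
  isBigO (N : ℕ) : u =O[⊤] fun x => W x ^ N

namespace IsFlatAlong

lemma exists_norm_le {u : X → E} (hu : IsFlatAlong W u) (N : ℕ) :
    ∃ C, 0 ≤ C ∧ ∀ x, ‖u x‖ ≤ C * |W x| ^ N := by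
  obtain ⟨C, hC, h⟩ := (hu.isBigO N).exists_nonneg
  exact ⟨C, hC, fun x => by simpa using isBigOWith_top.1 h x⟩

lemma eq_zero {u : X → E} (hu : IsFlatAlong W u) {x : X} (hx : W x = 0) : u x = 0 := by
  obtain ⟨C, -, h⟩ := hu.exists_norm_le 1
  simpa [hx] using h x

lemma integrable [MeasurableSpace X] [OpensMeasurableSpace X] {μ : Measure X}
    [IsFiniteMeasureOnCompacts μ] {u : X → E} (hu : IsFlatAlong W u) : Integrable u μ :=
  hu.continuous.integrable_of_hasCompactSupport hu.hasCompactSupport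

lemma mono {u : X → E} (hu : IsFlatAlong W u) (h : W =O[⊤] V) : IsFlatAlong V u :=
  ⟨hu.continuous, hu.hasCompactSupport, fun N => (hu.isBigO N).trans (h.pow N)⟩

lemma comp_isClosedEmbedding {u : X → E} (hu : IsFlatAlong W u) {i : Y → X}
    (hi : Topology.IsClosedEmbedding i) : IsFlatAlong (W ∘ i) (u ∘ i) :=
  ⟨hu.continuous.comp hi.continuous, hu.hasCompactSupport.comp_isClosedEmbedding hi,
    fun N => (hu.isBigO N).comp_tendsto tendsto_top⟩

lemma add {u v : X → E} (hu : IsFlatAlong W u) (hv : IsFlatAlong W v) :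
    IsFlatAlong W fun x => u x + v x :=
  ⟨hu.continuous.add hv.continuous, hu.hasCompactSupport.add hv.hasCompactSupport,
    fun N => (hu.isBigO N).add (hv.isBigO N)⟩

lemma sub {u v : X → E} (hu : IsFlatAlong W u) (hv : IsFlatAlong W v) :
    IsFlatAlong W fun x => u x - v x :=
  ⟨hu.continuous.sub hv.continuous, hu.hasCompactSupport.sub hv.hasCompactSupport,
    fun N => (hu.isBigO N).sub (hv.isBigO N)⟩

lemma mul {u v : X → ℂ} (hu : IsFlatAlong V u) (hv : IsFlatAlong W v) :
    IsFlatAlong (fun x => V x * W x) fun x => u x * v x :=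
  ⟨hu.continuous.mul hv.continuous, hu.hasCompactSupport.mul_right,
    fun N => by simpa only [mul_pow] using (hu.isBigO N).mul (hv.isBigO N)⟩

lemma clm_comp {F : Type*} [NormedSpace ℂ E] [NormedAddCommGroup F] [NormedSpace ℂ F] {u : X → E}
    (hu : IsFlatAlong W u) (L : E →L[ℂ] F) : IsFlatAlong W fun x => L (u x) :=
  ⟨L.continuous.comp hu.continuous, hu.hasCompactSupport.comp_left (map_zero L),
    fun N => (L.isBigO_comp u ⊤).trans (hu.isBigO N)⟩

lemma const_smul [NormedSpace ℂ E] {u : X → E} (hu : IsFlatAlong W u) (c : ℂ) :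
    IsFlatAlong W fun x => c • u x :=
  hu.clm_comp (c • ContinuousLinearMap.id ℂ E)

lemma continuous_mul {u : X → ℂ} (hu : IsFlatAlong W u) {φ : X → ℂ} (hφ : Continuous φ) :
    IsFlatAlong W fun x => φ x * u x := by
  refine ⟨hφ.mul hu.continuous, hu.hasCompactSupport.mul_left, fun N => ?_⟩
  obtain ⟨D, hD⟩ := hu.hasCompactSupport.isCompact.exists_bound_of_continuousOn hφ.continuousOn
  have hφu : (fun x => φ x * u x) =O[⊤] u := by
    refine isBigO_top.2 ⟨D, fun x => ?_⟩
    by_cases hx : x ∈ tsupport u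
    · rw [norm_mul]
      gcongr
      exact hD x hx
    · simp [image_eq_zero_of_notMem_tsupport hx]
  exact hφu.trans (hu.isBigO N)

end IsFlatAlong

lemma IsFlatAlong.integral_left [NormedSpace ℝ E] {u : ℂ × ℂ → E}
    (hu : IsFlatAlong (fun p => p.1.im * p.2.im) u) :
    IsFlatAlong Complex.im fun w => ∫ z, u (z, w) := by
  set K : Set ℂ := Prod.fst '' tsupport u
  have hK : IsCompact K := hu.hasCompactSupport.isCompact.image continuous_fst
  have hKu (z w : ℂ) (hz : z ∉ K) : u (z, w) = 0 :=
    image_eq_zero_of_notMem_tsupport fun h => hz ⟨(z, w), h, rfl⟩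
  have hset (w : ℂ) : ∫ z, u (z, w) = ∫ z in K, u (z, w) :=
    (setIntegral_eq_integral_of_forall_compl_eq_zero fun z hz => hKu z w hz).symm
  refine ⟨?_, ?_, fun N => ?_⟩
  · have hcont : Continuous (Function.uncurry fun w z => u (z, w)) :=
      hu.continuous.comp continuous_swap
    simpa only [hset] using continuous_parametric_integral_of_continuous hcont hK
  · refine HasCompactSupport.intro (hu.hasCompactSupport.isCompact.image continuous_snd)
      fun w hw => integral_eq_zero_of_ae (Eventually.of_forall fun z => ?_)
    exact image_eq_zero_of_notMem_tsupport fun h => hw ⟨(z, w), h, rfl⟩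
  · obtain ⟨C, hC, h⟩ := hu.exists_norm_le N
    obtain ⟨D, hD⟩ := hK.isBounded.exists_norm_le
    refine isBigO_top.2 ⟨C * D ^ N * volume.real K, fun w => ?_⟩
    rw [hset, norm_pow, Real.norm_eq_abs]
    calc ‖∫ z in K, u (z, w)‖ ≤ C * D ^ N * |w.im| ^ N * volume.real K := by
          refine norm_setIntegral_le_of_norm_le_const hK.measure_lt_top fun z hz => ?_
          calc ‖u (z, w)‖ ≤ C * |z.im * w.im| ^ N := h (z, w)
            _ = C * |z.im| ^ N * |w.im| ^ N := by rw [abs_mul, mul_pow, mul_assoc]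
            _ ≤ C * D ^ N * |w.im| ^ N := by
              gcongr
              exact (Complex.abs_im_le_norm z).trans (hD z hz)
      _ = C * D ^ N * volume.real K * |w.im| ^ N := by ring

end FlatFunctions

lemma ae_im_ne_zero : ∀ᵐ z : ℂ, z.im ≠ 0 := by
  have hker : LinearMap.ker Complex.imLm ≠ ⊤ := fun h => by
    have : I ∈ LinearMap.ker Complex.imLm := h ▸ Submodule.mem_top
    simp at this
  have hnull := Measure.addHaar_submodule (volume : Measure ℂ) _ hker
  filter_upwards [measure_eq_zero_iff_ae_notMem.1 hnull] with z hz
  simpa using hz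

section PseudoResolvent

variable {A : Type*} [NormedRing A] [NormedAlgebra ℂ A]

/-- A solution `R` of the first resolvent equation off the real axis, of locally temperate growth
at the real axis. The values of `R` on `ℝ` are irrelevant. -/
structure IsTemperatePseudoResolvent (R : ℂ → A) : Prop where
  temperate (M : ℝ) : ∃ (C : ℝ) (n : ℕ), ∀ z : ℂ, z.im ≠ 0 → ‖z‖ ≤ M → ‖R z‖ * |z.im| ^ n ≤ C
  sub_eq {z w : ℂ} (hz : z.im ≠ 0) (hw : w.im ≠ 0) : R z - R w = (w - z) • (R z * R w)

namespace IsTemperatePseudoResolvent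

variable {R : ℂ → A}

lemma isBigO_one (hR : IsTemperatePseudoResolvent R) {z : ℂ} (hz : z.im ≠ 0) :
    R =O[𝓝 z] fun _ => (1 : ℝ) := by
  obtain ⟨C, n, hC⟩ := hR.temperate (‖z‖ + 1)
  have him : Continuous fun w : ℂ => |w.im| ^ n := by fun_prop
  have hinv : (fun w : ℂ => C * (|w.im| ^ n)⁻¹) =O[𝓝 z] fun _ => (1 : ℝ) :=
    (tendsto_const_nhds.mul ((him.tendsto z).inv₀ (by positivity))).isBigO_one ℝ
  refine IsBigO.trans (.of_bound 1 ?_) hinv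
  filter_upwards [Complex.continuous_im.continuousAt.eventually_ne hz,
    continuous_norm.continuousAt.eventually_lt continuousAt_const (lt_add_one ‖z‖)] with w hw hwz
  have hpos : 0 < |w.im| ^ n := by positivity
  rw [one_mul, ← div_eq_mul_inv]
  exact ((le_div_iff₀ hpos).2 (hC w hw hwz.le)).trans (le_abs_self _)

lemma continuousAt (hR : IsTemperatePseudoResolvent R) {z : ℂ} (hz : z.im ≠ 0) :
    ContinuousAt R z := by
  have hsub : (fun w => R w - R z) =O[𝓝 z] fun w => z - w := by
    have hbdd : (fun w => R w * R z) =O[𝓝 z] fun _ => (1 : ℂ) :=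
      ((hR.isBigO_one hz).mul (isBigO_const_const (R z) (one_ne_zero (α := ℝ)) _)).trans
        (isBigO_const_const _ one_ne_zero _)
    refine ((isBigO_refl (fun w => z - w) (𝓝 z)).smul hbdd).congr' ?_ (by simp)
    filter_upwards [Complex.continuous_im.continuousAt.eventually_ne hz] with w hw
    exact (hR.sub_eq hw hz).symm
  have hzero : Tendsto (fun w => z - w) (𝓝 z) (𝓝 (z - z)) := tendsto_const_nhds.sub tendsto_id
  exact tendsto_sub_nhds_zero_iff.1 (hsub.trans_tendsto (sub_self z ▸ hzero))

lemma hasDerivAt (hR : IsTemperatePseudoResolvent R) {z : ℂ} (hz : z.im ≠ 0) :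
    HasDerivAt R (-(R z * R z)) z := by
  rw [hasDerivAt_iff_tendsto_slope]
  have hlim : Tendsto (fun w => -(R w * R z)) (𝓝 z) (𝓝 (-(R z * R z))) :=
    ((hR.continuousAt hz).mul continuousAt_const).neg
  refine (hlim.mono_left nhdsWithin_le_nhds).congr' ?_
  filter_upwards [nhdsWithin_le_nhds (Complex.continuous_im.continuousAt.eventually_ne hz),
    self_mem_nhdsWithin] with w hw hwz
  rw [slope_def_module, hR.sub_eq hw hz, smul_smul, ← neg_sub w z, mul_neg,
    inv_mul_cancel₀ (sub_ne_zero.2 hwz), neg_one_smul]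

end IsTemperatePseudoResolvent

variable {S X : Type*} [NormedRing S] [Module S A] [IsBoundedSMul S A] [TopologicalSpace X]

lemma IsFlatAlong.isBigO_smul_resolvent {W w : X → ℝ} {c : X → ℂ} {R : ℂ → A} {u : X → S}
    (hu : IsFlatAlong W u) (hR : IsTemperatePseudoResolvent R) (hc : Continuous c)
    (hw : Continuous w) (hW : ∀ x, W x = (c x).im * w x) (N : ℕ) :
    (fun x => u x • R (c x)) =O[⊤] fun x => W x ^ N := by
  have hK := hu.hasCompactSupport.isCompact
  obtain ⟨M, hM⟩ := hK.exists_bound_of_continuousOn hc.continuousOn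
  obtain ⟨L, hL⟩ := hK.exists_bound_of_continuousOn hw.continuousOn
  obtain ⟨D, n, hD⟩ := hR.temperate M
  obtain ⟨C, hC, hCu⟩ := hu.exists_norm_le (N + n)
  refine isBigO_top.2 ⟨C * |D| * |L| ^ n, fun x => ?_⟩
  rw [norm_pow, Real.norm_eq_abs]
  by_cases hx : u x = 0
  · rw [hx, zero_smul, norm_zero]
    positivity
  have hxK : x ∈ tsupport u := subset_tsupport u hx
  have him : (c x).im ≠ 0 := fun h => hx (hu.eq_zero (by rw [hW, h, zero_mul]))
  calc ‖u x • R (c x)‖ ≤ ‖u x‖ * ‖R (c x)‖ := norm_smul_le _ _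
    _ ≤ C * |W x| ^ (N + n) * ‖R (c x)‖ := by gcongr; exact hCu x
    _ = C * |W x| ^ N * (‖R (c x)‖ * |(c x).im| ^ n) * |w x| ^ n := by
      rw [pow_add, hW, abs_mul, mul_pow _ _ n]; ring
    _ ≤ C * |W x| ^ N * |D| * |L| ^ n := by
      have hwL : |w x| ^ n ≤ |L| ^ n :=
        pow_le_pow_left₀ (abs_nonneg _) ((hL x hxK).trans (le_abs_self L)) n
      gcongr
      exact (hD _ him (hM x hxK)).trans (le_abs_self D)
    _ = C * |D| * |L| ^ n * |W x| ^ N := by ring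

lemma IsFlatAlong.smul_resolvent {W w : X → ℝ} {c : X → ℂ} {R : ℂ → A} {u : X → S}
    (hu : IsFlatAlong W u) (hR : IsTemperatePseudoResolvent R) (hc : Continuous c)
    (hw : Continuous w) (hW : ∀ x, W x = (c x).im * w x) :
    IsFlatAlong W fun x => u x • R (c x) := by
  have hO := hu.isBigO_smul_resolvent hR hc hw hW
  refine ⟨continuous_iff_continuousAt.2 fun x => ?_, hu.hasCompactSupport.smul_right, hO⟩
  by_cases him : (c x).im = 0
  · have hWx : W x = 0 := by rw [hW, him, zero_mul]
    have hWlim : Tendsto W (𝓝 x) (𝓝 0) := by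
      have hWc : Continuous W := by
        rw [funext hW]
        fun_prop
      exact hWx ▸ hWc.tendsto x
    have hO' : (fun x => u x • R (c x)) =O[𝓝 x] W := by
      simpa using (hO 1).mono le_top
    rw [ContinuousAt, hu.eq_zero hWx, zero_smul]
    exact hO'.trans_tendsto hWlim
  · exact hu.continuous.continuousAt.smul
      (ContinuousAt.comp (f := c) (hR.continuousAt him) hc.continuousAt)

end PseudoResolvent

section CauchyKernel

lemma locallyIntegrable_inv : LocallyIntegrable (fun z : ℂ => z⁻¹) :=
  locallyIntegrable_of_norm_le_rpow (C := 1) (α := 1) (by simp) (by simp)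
    (.of_forall fun z => by rw [Real.rpow_neg_one, norm_inv, one_mul])
    measurable_inv.aestronglyMeasurable

lemma locallyIntegrable_inv_snd : LocallyIntegrable (fun p : ℂ × ℂ => p.2⁻¹) := by
  refine locallyIntegrable_iff.2 fun K hK => ?_
  have hK₁ : IsCompact (Prod.fst '' K) := hK.image continuous_fst
  have hK₂ : IsCompact (Prod.snd '' K) := hK.image continuous_snd
  have : IsFiniteMeasure (volume.restrict (Prod.fst '' K)) := ⟨by simpa using hK₁.measure_lt_top⟩
  have h := (locallyIntegrable_inv.integrableOn_isCompact hK₂).comp_snd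
    (volume.restrict (Prod.fst '' K))
  rw [Measure.prod_restrict] at h
  exact IntegrableOn.mono_set h fun p hp => ⟨mem_image_of_mem _ hp, mem_image_of_mem _ hp⟩

variable {E F G : Type*} [NormedAddCommGroup E] [NormedSpace ℂ E] [NormedAddCommGroup F]
  [NormedSpace ℂ F] [NormedAddCommGroup G] [NormedSpace ℂ G]

lemma integrable_inv_sub_smul {α : ℂ → E} (hα : Continuous α) (hα₀ : HasCompactSupport α)
    (z : ℂ) : Integrable fun w => (w - z)⁻¹ • α w := by
  have h := (locallyIntegrable_inv.integrable_smul_right_of_hasCompactSupport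
    (hα.comp (continuous_add_const z)) (hα₀.comp_homeomorph (Homeomorph.addRight z)))
  simpa using h.comp_sub_right z

lemma integrable_inv_snd_sub_smul {g : ℂ × ℂ → E} (hg : Continuous g) (hg₀ : HasCompactSupport g)
    {c : ℂ → ℂ} (hc : Continuous c) : Integrable fun p : ℂ × ℂ => (p.2 - c p.1)⁻¹ • g p := by
  let shear : ℂ × ℂ ≃ₜ ℂ × ℂ :=
    { toFun p := (p.1, p.2 + c p.1)
      invFun p := (p.1, p.2 - c p.1)
      left_inv p := by simp
      right_inv p := by simp
      continuous_toFun := by fun_prop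
      continuous_invFun := by fun_prop }
  have hpres : MeasurePreserving shear :=
    (MeasurePreserving.id volume).skew_product (g := fun z w => w + c z) (by fun_prop)
      (.of_forall fun z => map_add_right_eq_self volume (c z))
  have h := locallyIntegrable_inv_snd.integrable_smul_right_of_hasCompactSupport
    (hg.comp shear.continuous) (hg₀.comp_homeomorph shear)
  rw [← hpres.integrable_comp_emb shear.measurableEmbedding]
  simpa [shear, Function.comp_def] using h

lemma cauchyTransform_integral {g : ℂ × ℂ → E} (hg : Continuous g) (hg₀ : HasCompactSupport g)
    (w : ℂ) : cauchyTransform (fun w => ∫ z, g (z, w)) w =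
      ∫ z, cauchyTransform (fun w => g (z, w)) w := by
  have h_int := integrable_inv_snd_sub_smul hg hg₀ (c := fun _ => w) continuous_const
  simp only [cauchyTransform]
  rw [integral_smul, integral_integral_swap h_int]
  simp only [integral_smul]

lemma integrable_cauchyKernel (B : E →L[ℂ] F →L[ℂ] G) {α : ℂ → E} {v : ℂ → F}
    (hα : Continuous α) (hα₀ : HasCompactSupport α) (hv : Continuous v)
    (hv₀ : HasCompactSupport v) :
    Integrable fun p : ℂ × ℂ => (p.2 - p.1)⁻¹ • B (α p.2) (v p.1) := by
  have hg : Continuous fun p : ℂ × ℂ => B (α p.2) (v p.1) :=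
    (B.continuous.comp (hα.comp continuous_snd)).clm_apply (hv.comp continuous_fst)
  have hg₀ : HasCompactSupport fun p : ℂ × ℂ => B (α p.2) (v p.1) := by
    refine HasCompactSupport.intro (hv₀.isCompact.prod hα₀.isCompact) fun p hp => ?_
    rcases not_and_or.1 hp with h | h
    · rw [image_eq_zero_of_notMem_tsupport h, map_zero]
    · rw [image_eq_zero_of_notMem_tsupport h, map_zero]
      rfl
  exact integrable_inv_snd_sub_smul hg hg₀ (c := fun z => z) continuous_id

variable [CompleteSpace E] [CompleteSpace G]

lemma inv_pi_smul_integral_cauchyKernel (B : E →L[ℂ] F →L[ℂ] G) {α : ℂ → E}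
    (hα : Continuous α) (hα₀ : HasCompactSupport α) (x : F) (z : ℂ) :
    (-(π : ℂ)⁻¹) • ∫ w, (w - z)⁻¹ • B (α w) x = B (cauchyTransform α z) x := by
  have h := (B.flip x).integral_comp_comm (integrable_inv_sub_smul hα hα₀ z)
  simp only [map_smul, ContinuousLinearMap.flip_apply] at h
  rw [h, cauchyTransform, map_smul, smul_apply]

lemma inv_pi_smul_integral_prod_cauchyKernel (B : E →L[ℂ] F →L[ℂ] G) {α : ℂ → E} {v : ℂ → F}
    (hα : Continuous α) (hα₀ : HasCompactSupport α) (hv : Continuous v)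
    (hv₀ : HasCompactSupport v) :
    (-(π : ℂ)⁻¹) • ∫ p : ℂ × ℂ, (p.2 - p.1)⁻¹ • B (α p.2) (v p.1) =
      ∫ z, B (cauchyTransform α z) (v z) := by
  rw [Measure.volume_eq_prod, integral_prod _ (integrable_cauchyKernel B hα hα₀ hv hv₀),
    ← integral_smul]
  simp only [inv_pi_smul_integral_cauchyKernel B hα hα₀]

lemma integrable_cauchyTransform (B : E →L[ℂ] F →L[ℂ] G) {α : ℂ → E} {v : ℂ → F}
    (hα : Continuous α) (hα₀ : HasCompactSupport α) (hv : Continuous v)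
    (hv₀ : HasCompactSupport v) : Integrable fun z => B (cauchyTransform α z) (v z) := by
  have h := (integrable_cauchyKernel B hα hα₀ hv hv₀).integral_prod_left.smul (-(π : ℂ)⁻¹)
  simpa only [Pi.smul_def, inv_pi_smul_integral_cauchyKernel B hα hα₀] using h

end CauchyKernel

section OneVariable

variable {A S : Type*} [NormedRing A] [NormedAlgebra ℂ A] [NormedRing S] [Module S A]
  {R : ℂ → A} {α β : ℂ → A}

/-- The one-variable Helffer–Sjöstrand integral `-π⁻¹ ∫ α(z) R(z) L(dz)`, which defines `a(P)` when
`R` is the resolvent of `P` and `α = ∂a/∂z̄`. The density `α` may be scalar or operator valued. -/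
def helfferSjostrand (R : ℂ → A) (α : ℂ → S) : A := (-(π : ℂ)⁻¹) • ∫ z, α z • R z

lemma IsTemperatePseudoResolvent.mul_mul_mul_eq (hR : IsTemperatePseudoResolvent R) {z w : ℂ}
    (hz : z.im ≠ 0) (hw : w.im ≠ 0) (hzw : z ≠ w) (a : A) {b : A} (hb : Commute (R z) b) :
    (a * R z) * (b * R w) = (w - z)⁻¹ • (a * R z * b) + (z - w)⁻¹ • (a * (b * R w)) := by
  have hmul : R z * R w = (w - z)⁻¹ • (R z - R w) := by
    rw [hR.sub_eq hz hw, inv_smul_smul₀ (sub_ne_zero.2 hzw.symm)]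
  have hcomm : (a * R z) * (b * R w) = a * b * (R z * R w) := by
    simp only [mul_assoc, hb.left_comm]
  rw [hcomm, hmul, ← neg_sub w z, inv_neg, mul_smul_comm, mul_sub, smul_sub, neg_smul,
    mul_assoc a (R z), hb.eq, ← sub_eq_add_neg, mul_assoc, mul_assoc]

lemma IsFlatAlong.smul_resolvent_im [IsBoundedSMul S A] {α : ℂ → S}
    (hα : IsFlatAlong Complex.im α) (hR : IsTemperatePseudoResolvent R) :
    IsFlatAlong Complex.im fun z => α z • R z :=
  hα.smul_resolvent hR continuous_id (w := fun _ => 1) continuous_const fun _ => (mul_one _).symm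

lemma commute_cauchyTransform {a : A} (hβ : Continuous β) (hβ₀ : HasCompactSupport β)
    (hcomm : ∀ w, Commute a (β w)) (z : ℂ) : Commute a (cauchyTransform β z) := by
  have h_int := integrable_inv_sub_smul hβ hβ₀ z
  refine Commute.smul_right ?_ _
  rw [commute_iff_eq, ← integral_const_mul_of_integrable h_int,
    ← integral_mul_const_of_integrable h_int]
  simp only [mul_smul_comm, smul_mul_assoc, (hcomm _).eq]

variable [CompleteSpace A]

lemma integral_mul_resolvent_mul_integral_mul_resolvent (hR : IsTemperatePseudoResolvent R)
    (hα : IsFlatAlong Complex.im α) (hβ : IsFlatAlong Complex.im β)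
    (hcomm : ∀ z w, z.im ≠ 0 → Commute (R z) (β w)) :
    (∫ z, α z * R z) * ∫ w, β w * R w =
      ∫ p : ℂ × ℂ, ((p.2 - p.1)⁻¹ • (α p.1 * R p.1 * β p.2) +
        (p.1 - p.2)⁻¹ • (α p.1 * (β p.2 * R p.2))) := by
  have hU : Integrable fun z => α z * R z := (hα.smul_resolvent_im hR).integrable
  have hV : Integrable fun w => β w * R w := (hβ.smul_resolvent_im hR).integrable
  rw [← ContinuousLinearMap.mul_apply' ℂ, ← integral_prod_bilin _ hU hV]
  refine integral_congr_ae ?_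
  have hdiag : ∀ᵐ p : ℂ × ℂ, p.1 ≠ p.2 :=
    (Measure.ae_prod_iff_ae_ae isClosed_diagonal.isOpen_compl.measurableSet).2 <|
      .of_forall fun z => (Measure.ae_ne volume z).mono fun _ => Ne.symm
  filter_upwards [Measure.quasiMeasurePreserving_fst.ae ae_im_ne_zero,
    Measure.quasiMeasurePreserving_snd.ae ae_im_ne_zero, hdiag] with p hz hw hzw
  exact hR.mul_mul_mul_eq hz hw hzw (α p.1) (hcomm _ _ hz)

lemma inv_pi_smul_integral_mul_cauchyKernel_add {α β U V : ℂ → A}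
    (hα : Continuous α) (hα₀ : HasCompactSupport α) (hβ : Continuous β)
    (hβ₀ : HasCompactSupport β) (hU : Continuous U) (hU₀ : HasCompactSupport U)
    (hV : Continuous V) (hV₀ : HasCompactSupport V) :
    (-(π : ℂ)⁻¹) • ∫ p : ℂ × ℂ, ((p.2 - p.1)⁻¹ • (U p.1 * β p.2) +
      (p.1 - p.2)⁻¹ • (α p.1 * V p.2)) =
        ∫ z, (U z * cauchyTransform β z + cauchyTransform α z * V z) := by
  let B := ContinuousLinearMap.mul ℂ A
  have hUβ : Integrable fun p : ℂ × ℂ => (p.2 - p.1)⁻¹ • (U p.1 * β p.2) :=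
    integrable_cauchyKernel B.flip hβ hβ₀ hU hU₀
  have hαV : Integrable fun p : ℂ × ℂ => (p.1 - p.2)⁻¹ • (α p.1 * V p.2) :=
    (integrable_cauchyKernel B hα hα₀ hV hV₀).swap
  have hUβ_eq : (-(π : ℂ)⁻¹) • ∫ p : ℂ × ℂ, (p.2 - p.1)⁻¹ • (U p.1 * β p.2) =
      ∫ z, U z * cauchyTransform β z :=
    inv_pi_smul_integral_prod_cauchyKernel B.flip hβ hβ₀ hU hU₀
  have hαV_eq : (-(π : ℂ)⁻¹) • ∫ p : ℂ × ℂ, (p.1 - p.2)⁻¹ • (α p.1 * V p.2) =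
      ∫ z, cauchyTransform α z * V z := by
    rw [Measure.volume_eq_prod, ← integral_prod_swap]
    exact inv_pi_smul_integral_prod_cauchyKernel B hα hα₀ hV hV₀
  rw [integral_add hUβ hαV, smul_add, hUβ_eq, hαV_eq]
  exact (integral_add (integrable_cauchyTransform B.flip hβ hβ₀ hU hU₀)
    (integrable_cauchyTransform B hα hα₀ hV hV₀)).symm

theorem helfferSjostrand_mul (hR : IsTemperatePseudoResolvent R)
    (hα : IsFlatAlong Complex.im α) (hβ : IsFlatAlong Complex.im β)
    (hcomm : ∀ z w, z.im ≠ 0 → Commute (R z) (β w)) :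
    helfferSjostrand R α * helfferSjostrand R β = helfferSjostrand R fun z =>
      α z * cauchyTransform β z + cauchyTransform α z * β z := by
  have hU : IsFlatAlong Complex.im fun z => α z * R z := hα.smul_resolvent_im hR
  have hV : IsFlatAlong Complex.im fun w => β w * R w := hβ.smul_resolvent_im hR
  have hpoint : ∀ᵐ z : ℂ, α z * R z * cauchyTransform β z + cauchyTransform α z * (β z * R z) =
      (α z * cauchyTransform β z + cauchyTransform α z * β z) * R z := by
    filter_upwards [ae_im_ne_zero] with z hz
    have hRβ := commute_cauchyTransform hβ.continuous hβ.hasCompactSupport (hcomm z · hz) z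
    rw [add_mul, mul_assoc, hRβ.eq, mul_assoc, mul_assoc]
  simp only [helfferSjostrand, smul_eq_mul, smul_mul_assoc, mul_smul_comm]
  rw [integral_mul_resolvent_mul_integral_mul_resolvent hR hα hβ hcomm,
    inv_pi_smul_integral_mul_cauchyKernel_add hα.continuous hα.hasCompactSupport hβ.continuous
      hβ.hasCompactSupport hU.continuous hU.hasCompactSupport hV.continuous hV.hasCompactSupport,
    integral_congr_ae hpoint]

lemma cauchyTransform_algebraMap {α : ℂ → ℂ} (hα : Continuous α) (hα₀ : HasCompactSupport α)
    (z : ℂ) : cauchyTransform (fun w => algebraMap ℂ A (α w)) z =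
      algebraMap ℂ A (cauchyTransform α z) := by
  have h := (algebraMapCLM ℂ A).integral_comp_comm (integrable_inv_sub_smul hα hα₀ z)
  simp only [cauchyTransform, map_smul, algebraMapCLM_apply] at h ⊢
  rw [h, ← algebraMapCLM_apply, ← algebraMapCLM_apply, map_smul]

theorem helfferSjostrand_scalar_mul (hR : IsTemperatePseudoResolvent R) {α β : ℂ → ℂ}
    (hα : IsFlatAlong Complex.im α) (hβ : IsFlatAlong Complex.im β) :
    helfferSjostrand R α * helfferSjostrand R β = helfferSjostrand R fun z =>
      α z * cauchyTransform β z + cauchyTransform α z * β z := by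
  have h := helfferSjostrand_mul hR (hα.clm_comp (algebraMapCLM ℂ A))
    (hβ.clm_comp (algebraMapCLM ℂ A)) fun z w _ => Algebra.commute_algebraMap_right _ _
  simp only [helfferSjostrand, algebraMapCLM_apply,
    cauchyTransform_algebraMap hα.continuous hα.hasCompactSupport,
    cauchyTransform_algebraMap hβ.continuous hβ.hasCompactSupport, ← map_mul, ← map_add,
    algebraMap_smul] at h ⊢
  exact h

end OneVariable

section CauchyTransform

variable {E : Type*} [NormedAddCommGroup E] [NormedSpace ℂ E] {α β : ℂ → E}

lemma cauchyTransform_sub (hα : Continuous α) (hα₀ : HasCompactSupport α) (hβ : Continuous β)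
    (hβ₀ : HasCompactSupport β) (z : ℂ) :
    cauchyTransform (fun w => α w - β w) z = cauchyTransform α z - cauchyTransform β z := by
  simp only [cauchyTransform, smul_sub]
  rw [integral_sub (integrable_inv_sub_smul hα hα₀ z) (integrable_inv_sub_smul hβ hβ₀ z),
    smul_sub]

lemma continuous_cauchyTransform (hα : Continuous α) (hα₀ : HasCompactSupport α) :
    Continuous (cauchyTransform α) := by
  have hconv := (hα₀.continuous_convolution_right (.lsmul ℂ ℂ) locallyIntegrable_inv hα).const_smul
    (π : ℂ)⁻¹
  refine hconv.congr fun z => ?_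
  rw [cauchyTransform, ← integral_sub_left_eq_self _ _ z, neg_smul, ← smul_neg, ← integral_neg]
  simp [convolution_def, inv_neg]

lemma tendsto_cauchyTransform_cocompact (hα : Continuous α) (hα₀ : HasCompactSupport α) :
    Tendsto (cauchyTransform α) (cocompact ℂ) (𝓝 0) := by
  rw [← Metric.cobounded_eq_cocompact]
  have : (Bornology.cobounded ℂ).IsCountablyGenerated := by
    rw [← comap_norm_atTop]
    infer_instance
  obtain ⟨M, hM⟩ := hα₀.isCompact.isBounded.exists_norm_le
  have hlim (w : ℂ) : Tendsto (fun z => (w - z)⁻¹ • α w) (Bornology.cobounded ℂ) (𝓝 0) := by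
    simpa using (tendsto_inv₀_cobounded.comp (tendsto_const_sub_cobounded w)).smul_const (α w)
  have hbound : ∀ᶠ z in Bornology.cobounded ℂ, ∀ᵐ w, ‖(w - z)⁻¹ • α w‖ ≤ ‖α w‖ := by
    filter_upwards [tendsto_norm_cobounded_atTop.eventually_ge_atTop (M + 1)] with z hz
    refine .of_forall fun w => ?_
    by_cases hw : w ∈ tsupport α
    · have hone : 1 ≤ ‖w - z‖ := by
        linarith [hM w hw, norm_sub_norm_le z w, norm_sub_rev z w]
      rw [norm_smul, norm_inv]
      exact mul_le_of_le_one_left (norm_nonneg _) (inv_le_one_of_one_le₀ hone)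
    · simp [image_eq_zero_of_notMem_tsupport hw]
  have h := (tendsto_integral_filter_of_dominated_convergence (fun w => ‖α w‖)
    (.of_forall fun z => (integrable_inv_sub_smul hα hα₀ z).aestronglyMeasurable) hbound
    (hα.integrable_of_hasCompactSupport hα₀).norm (.of_forall hlim)).const_smul
    (-(π : ℂ)⁻¹)
  rwa [integral_zero, smul_zero] at h

lemma exists_norm_cauchyTransform_le (E : Type*) [NormedAddCommGroup E] [NormedSpace ℂ E] (M : ℝ) :
    ∃ D, ∀ (α : ℂ → E) (C : ℝ), (∀ w, ‖α w‖ ≤ C) → (∀ w, M < ‖w‖ → α w = 0) →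
      ∀ z, ‖z‖ ≤ M → ‖cauchyTransform α z‖ ≤ D * C := by
  have h_int : IntegrableOn (fun v : ℂ => ‖v⁻¹‖) (Metric.closedBall 0 (2 * M)) :=
    (locallyIntegrable_inv.integrableOn_isCompact (isCompact_closedBall _ _)).norm
  refine ⟨π⁻¹ * ∫ v in Metric.closedBall (0 : ℂ) (2 * M), ‖v⁻¹‖, fun α C hC hM z hz => ?_⟩
  have hshift : ∫ w, (w - z)⁻¹ • α w =
      ∫ v in Metric.closedBall (0 : ℂ) (2 * M), v⁻¹ • α (v + z) := by
    rw [← integral_add_right_eq_self _ z, setIntegral_eq_integral_of_forall_compl_eq_zero]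
    · simp
    · intro v hv
      have hlt : 2 * M < ‖v‖ := by simpa using hv
      rw [hM _ (by linarith [norm_le_add_norm_add v z]), smul_zero]
  rw [cauchyTransform, hshift, norm_smul, norm_neg, norm_inv, Complex.norm_real,
    Real.norm_of_nonneg Real.pi_pos.le, mul_assoc, ← integral_mul_const]
  gcongr
  refine norm_integral_le_of_norm_le (h_int.mul_const C) (.of_forall fun v => ?_)
  rw [norm_smul]
  gcongr
  exact hC _

lemma cauchyTransform_sub_smul (hα : Continuous α) (hα₀ : HasCompactSupport α) (x z : ℂ) :
    cauchyTransform (fun w => (w - x) • α w) z =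
      (z - x) • cauchyTransform α z - (π : ℂ)⁻¹ • ∫ w, α w := by
  have hae : ∀ᵐ w, (w - z)⁻¹ • (w - x) • α w = (z - x) • (w - z)⁻¹ • α w + α w := by
    filter_upwards [Measure.ae_ne volume z] with w hw
    have hquot : (w - z)⁻¹ * (w - x) = (z - x) * (w - z)⁻¹ + 1 := by
      field_simp [sub_ne_zero.2 hw]
      ring
    rw [smul_smul, hquot, add_smul, one_smul, mul_smul]
  rw [cauchyTransform, cauchyTransform, integral_congr_ae hae,
    integral_add ((integrable_inv_sub_smul hα hα₀ z).fun_smul _)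
      (hα.integrable_of_hasCompactSupport hα₀), integral_smul]
  module

lemma integral_eq_zero_of_hasCompactSupport_cauchyTransform (hα : Continuous α)
    (hα₀ : HasCompactSupport α) (h : HasCompactSupport (cauchyTransform α)) : ∫ w, α w = 0 := by
  have hlim : Tendsto (cauchyTransform fun w => (w - 0) • α w) (cocompact ℂ)
      (𝓝 (-((π : ℂ)⁻¹ • ∫ w, α w))) := by
    refine tendsto_const_nhds.congr' ?_
    filter_upwards [h.isCompact.compl_mem_cocompact] with z hz
    rw [cauchyTransform_sub_smul hα hα₀, image_eq_zero_of_notMem_tsupport hz, smul_zero, zero_sub]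
  have hzero := tendsto_nhds_unique hlim
    (tendsto_cauchyTransform_cocompact (by fun_prop) hα₀.smul_left)
  simpa [Real.pi_ne_zero] using hzero

end CauchyTransform

section FlatCauchyTransform

variable {S : Type*} [NormedRing S] [NormedAlgebra ℂ S] {α : ℂ → S}

lemma norm_inv_sub_pow_smul_le {C : ℝ} {N : ℕ} {w : ℂ} {a : S} (hC : 0 ≤ C)
    (ha : ‖a‖ ≤ C * |w.im| ^ N) (x : ℝ) : ‖((w - x)⁻¹) ^ N • a‖ ≤ C := by
  have him : |w.im| ≤ ‖w - x‖ := by simpa using Complex.abs_im_le_norm (w - x)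
  calc ‖((w - x)⁻¹) ^ N • a‖ ≤ ‖w - x‖⁻¹ ^ N * (C * |w.im| ^ N) := by
        rw [norm_smul, norm_pow, norm_inv]
        gcongr
    _ = C * (‖w - x‖⁻¹ * |w.im|) ^ N := by rw [mul_pow]; ring
    _ ≤ C * 1 ^ N := by gcongr; exact inv_mul_le_one_of_le₀ him (norm_nonneg _)
    _ = C := by simp

lemma isTemperatePseudoResolvent_inv_sub (x : ℝ) :
    IsTemperatePseudoResolvent fun z : ℂ => (z - x)⁻¹ • (1 : S) where
  temperate M := by
    refine ⟨‖(1 : S)‖, 1, fun z hz _ => ?_⟩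
    have him : |z.im| ≤ ‖z - x‖ := by simpa using Complex.abs_im_le_norm (z - x)
    have hpos : 0 < ‖z - x‖ := (abs_pos.2 hz).trans_le him
    rw [norm_smul, norm_inv, pow_one, mul_right_comm]
    exact mul_le_of_le_one_left (norm_nonneg _) ((inv_mul_le_one₀ hpos).2 him)
  sub_eq {z w} hz hw := by
    have hsub {v : ℂ} (hv : v.im ≠ 0) : v - x ≠ 0 := fun h =>
      hv (by simpa using congrArg Complex.im h)
    rw [smul_mul_smul_comm, one_mul, ← sub_smul, smul_smul]
    congr 1
    field_simp [hsub hz, hsub hw]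
    ring

namespace IsFlatAlong

lemma inv_sub_smul (hα : IsFlatAlong Complex.im α) (x : ℝ) :
    IsFlatAlong Complex.im fun w => (w - x)⁻¹ • α w := by
  simpa using hα.smul_resolvent_im (isTemperatePseudoResolvent_inv_sub (S := S) x)

lemma cauchyTransform_eq_add_smul (hα : IsFlatAlong Complex.im α) (x : ℝ) (z : ℂ) :
    cauchyTransform α z =
      cauchyTransform α x + (z - x) • cauchyTransform (fun w => (w - x)⁻¹ • α w) z := by
  have hαx := hα.inv_sub_smul x
  have hmul : (fun w : ℂ => (w - x) • (w - x : ℂ)⁻¹ • α w) = α := by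
    ext w
    by_cases hw : w = x
    · rw [hw, hα.eq_zero (Complex.ofReal_im x), smul_zero, smul_zero]
    · rw [smul_inv_smul₀ (sub_ne_zero.2 hw)]
  have h := cauchyTransform_sub_smul hαx.continuous hαx.hasCompactSupport x z
  rw [hmul] at h
  rw [h, cauchyTransform.eq_1 α x, neg_smul]
  abel

lemma cauchyTransform_inv_sub_smul_ofReal (hα : IsFlatAlong Complex.im α)
    (h₀ : ∀ y : ℝ, cauchyTransform α y = 0) (x y : ℝ) :
    cauchyTransform (fun w => (w - x)⁻¹ • α w) y = 0 := by
  have hαx := hα.inv_sub_smul x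
  have hcont : Continuous fun y : ℝ => cauchyTransform (fun w => (w - x)⁻¹ • α w) y :=
    (continuous_cauchyTransform hαx.continuous hαx.hasCompactSupport).comp Complex.continuous_ofReal
  have hne : EqOn (fun y : ℝ => cauchyTransform (fun w => (w - x)⁻¹ • α w) y) 0 {x}ᶜ :=
    fun y hy => by
      have h := hα.cauchyTransform_eq_add_smul x y
      rw [h₀, h₀, zero_add, eq_comm, smul_eq_zero] at h
      exact h.resolve_left (sub_ne_zero.2 (Complex.ofReal_injective.ne hy))
  exact congrFun (hcont.ext_on (dense_compl_singleton x) continuous_const hne) y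

lemma cauchyTransform_eq_pow_smul (hα : IsFlatAlong Complex.im α)
    (h₀ : ∀ y : ℝ, cauchyTransform α y = 0) (x : ℝ) (z : ℂ) (N : ℕ) :
    cauchyTransform α z =
      (z - x) ^ N • cauchyTransform (fun w => ((w - x)⁻¹) ^ N • α w) z := by
  induction N generalizing α with
  | zero => simp
  | succ N ih =>
    have h := ih (hα.inv_sub_smul x) (hα.cauchyTransform_inv_sub_smul_ofReal h₀ x)
    simp only [smul_smul, ← pow_succ] at h
    rw [hα.cauchyTransform_eq_add_smul x z, h₀, zero_add, h, smul_smul, ← pow_succ']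

end IsFlatAlong

lemma isFlatAlong_cauchyTransform (hα : IsFlatAlong Complex.im α)
    (h₀ : ∀ y : ℝ, cauchyTransform α y = 0) (hsupp : HasCompactSupport (cauchyTransform α)) :
    IsFlatAlong Complex.im (cauchyTransform α) := by
  refine ⟨continuous_cauchyTransform hα.continuous hα.hasCompactSupport, hsupp, fun N => ?_⟩
  obtain ⟨M, hM⟩ := (hα.hasCompactSupport.isCompact.union hsupp.isCompact).isBounded.exists_norm_le
  obtain ⟨D, hD⟩ := exists_norm_cauchyTransform_le S M
  obtain ⟨C, hC, hαC⟩ := hα.exists_norm_le N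
  refine isBigO_top.2 ⟨|D * C|, fun z => ?_⟩
  by_cases hz : z ∈ tsupport (cauchyTransform α)
  swap
  · rw [image_eq_zero_of_notMem_tsupport hz, norm_zero]
    positivity
  have hre : ‖z - z.re‖ = |z.im| := by
    have hsub : z - z.re = z.im * I := by apply Complex.ext <;> simp
    simp [hsub]
  rw [hα.cauchyTransform_eq_pow_smul h₀ z.re z N, norm_smul, norm_pow, hre, norm_pow,
    Real.norm_eq_abs, mul_comm]
  gcongr
  refine (hD _ C (fun w => norm_inv_sub_pow_smul_le hC (hαC w) z.re) (fun w hw => ?_) z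
    (hM z (.inr hz))).trans (le_abs_self _)
  rw [image_eq_zero_of_notMem_tsupport fun h => hw.not_ge (hM w (.inl h)), smul_zero]

end FlatCauchyTransform

section Uniqueness

variable {A S : Type*} [NormedRing A] [NormedAlgebra ℂ A] [NormedRing S] [NormedAlgebra ℂ S]
  [Module S A] [IsBoundedSMul S A] [IsScalarTower ℂ S A] {R : ℂ → A} {α β : ℂ → S}

lemma hasDerivAt_smul_resolvent_sub_cauchyTransform (hR : IsTemperatePseudoResolvent R)
    (hα : IsFlatAlong Complex.im α) (h₀ : ∀ y : ℝ, cauchyTransform α y = 0)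
    (hsupp : HasCompactSupport (cauchyTransform α)) (x : ℝ) :
    HasDerivAt (fun z => cauchyTransform α z • R z - cauchyTransform (fun w => α w • R w) z)
      (-cauchyTransform (fun w => (w - x)⁻¹ • α w • R w) x) x := by
  have hαR := hα.smul_resolvent_im hR
  have hαRx := hαR.inv_sub_smul x
  have hbx := (isFlatAlong_cauchyTransform hα h₀ hsupp).inv_sub_smul x
  have hlim := ((hbx.smul_resolvent_im hR).continuous.sub
    (continuous_cauchyTransform hαRx.continuous hαRx.hasCompactSupport)).tendsto (x : ℂ)
  simp only [Pi.sub_apply, h₀, smul_zero, zero_smul, zero_sub] at hlim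
  rw [hasDerivAt_iff_tendsto_slope]
  refine (hlim.mono_left nhdsWithin_le_nhds).congr' ?_
  filter_upwards [self_mem_nhdsWithin] with z hz
  rw [Pi.sub_apply, smul_assoc, slope_def_module, h₀, zero_smul, zero_sub,
    hαR.cauchyTransform_eq_add_smul x z, sub_neg_eq_add, sub_add_eq_sub_sub_swap, sub_add_cancel,
    smul_sub, inv_smul_smul₀ (sub_ne_zero.2 hz)]

variable [IsScalarTower S A A] [CompleteSpace A] [CompleteSpace S]

lemma cauchyTransform_smul_resolvent (hR : IsTemperatePseudoResolvent R)
    (hα : IsFlatAlong Complex.im α) {z : ℂ} (hz : z.im ≠ 0) :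
    cauchyTransform (fun w => α w • R w) z =
      cauchyTransform α z • R z - helfferSjostrand R α * R z := by
  have hαR := (hα.smul_resolvent_im hR).integrable (μ := volume)
  have hker : Integrable fun w => (w - z)⁻¹ • α w • R z :=
    integrable_inv_sub_smul (hα.continuous.smul continuous_const) hα.hasCompactSupport.smul_right z
  have hae : ∀ᵐ w, (w - z)⁻¹ • α w • R w = (w - z)⁻¹ • α w • R z - (α w • R w) * R z := by
    filter_upwards [ae_im_ne_zero, Measure.ae_ne volume z] with w hw hwz
    have h : R w = R z - (w - z) • (R w * R z) := by
      rw [← neg_sub z w, neg_smul, ← hR.sub_eq hw hz]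
      abel
    rw [smul_mul_assoc]
    nth_rw 1 [h]
    rw [smul_sub, smul_sub, smul_comm (α w), inv_smul_smul₀ (sub_ne_zero.2 hwz)]
  have hpair := inv_pi_smul_integral_cauchyKernel (.lsmul ℂ S) hα.continuous hα.hasCompactSupport
    (R z) z
  simp only [ContinuousLinearMap.lsmul_apply] at hpair
  rw [cauchyTransform, integral_congr_ae hae, integral_sub hker (hαR.mul_const _), smul_sub, hpair,
    integral_mul_const_of_integrable hαR, helfferSjostrand, smul_mul_assoc]

lemma differentiable_smul_resolvent_sub_cauchyTransform (hR : IsTemperatePseudoResolvent R)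
    (hα : IsFlatAlong Complex.im α) (h₀ : ∀ y : ℝ, cauchyTransform α y = 0)
    (hsupp : HasCompactSupport (cauchyTransform α)) :
    Differentiable ℂ fun z =>
      cauchyTransform α z • R z - cauchyTransform (fun w => α w • R w) z := by
  intro z
  by_cases hz : z.im = 0
  · obtain ⟨x, rfl⟩ : ∃ x : ℝ, (x : ℂ) = z := ⟨z.re, Complex.ext rfl hz.symm⟩
    exact (hasDerivAt_smul_resolvent_sub_cauchyTransform hR hα h₀ hsupp x).differentiableAt
  · have heq : (fun z => cauchyTransform α z • R z - cauchyTransform (fun w => α w • R w) z)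
        =ᶠ[𝓝 z] fun z => helfferSjostrand R α * R z := by
      filter_upwards [Complex.continuous_im.continuousAt.eventually_ne hz] with w hw
      rw [cauchyTransform_smul_resolvent hR hα hw, sub_sub_cancel]
    exact ((hR.hasDerivAt hz).differentiableAt.const_mul _).congr_of_eventuallyEq heq

theorem helfferSjostrand_eq_zero (hR : IsTemperatePseudoResolvent R)
    (hα : IsFlatAlong Complex.im α) (h₀ : ∀ y : ℝ, cauchyTransform α y = 0)
    (hsupp : HasCompactSupport (cauchyTransform α)) : helfferSjostrand R α = 0 := by
  have hαR := hα.smul_resolvent_im hR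
  have hb : HasCompactSupport fun z => cauchyTransform α z • R z := hsupp.smul_right
  have hlim : Tendsto (fun z => cauchyTransform α z • R z - cauchyTransform (fun w => α w • R w) z)
      (cocompact ℂ) (𝓝 (0 - 0)) :=
    hb.is_zero_at_infty.sub
      (tendsto_cauchyTransform_cocompact hαR.continuous hαR.hasCompactSupport)
  have heq : (fun z => cauchyTransform α z • R z) = cauchyTransform fun w => α w • R w := by
    ext z
    have h := (differentiable_smul_resolvent_sub_cauchyTransform hR hα h₀
      hsupp).apply_eq_of_tendsto_cocompact z hlim
    exact sub_eq_zero.1 (h.trans (sub_zero 0))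
  rw [helfferSjostrand, integral_eq_zero_of_hasCompactSupport_cauchyTransform hαR.continuous
    hαR.hasCompactSupport (heq ▸ hb), smul_zero]

theorem helfferSjostrand_congr (hR : IsTemperatePseudoResolvent R)
    (hα : IsFlatAlong Complex.im α) (hβ : IsFlatAlong Complex.im β)
    (hα₀ : HasCompactSupport (cauchyTransform α)) (hβ₀ : HasCompactSupport (cauchyTransform β))
    (h : ∀ y : ℝ, cauchyTransform α y = cauchyTransform β y) :
    helfferSjostrand R α = helfferSjostrand R β := by
  have hsub := cauchyTransform_sub hα.continuous hα.hasCompactSupport hβ.continuous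
    hβ.hasCompactSupport
  have hzero : helfferSjostrand R (fun z => α z - β z) = 0 := by
    refine helfferSjostrand_eq_zero hR (hα.sub hβ) (fun y => by rw [hsub, h, sub_self]) ?_
    rw [funext hsub]
    exact hα₀.sub hβ₀
  simp only [helfferSjostrand, sub_smul] at hzero
  rwa [integral_sub (hα.smul_resolvent_im hR).integrable (hβ.smul_resolvent_im hR).integrable,
    smul_sub, sub_eq_zero] at hzero

end Uniqueness

lemma dbar12_mul {F G : ℂ × ℂ → ℂ} (hF : ContDiff ℝ 2 F) (hG : ContDiff ℝ 2 G) (z : ℂ × ℂ) :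
    dbar12 (fun z => F z * G z) z =
      (dbar12 F z * G z + dbar2 F z * dbar1 G z) + (dbar1 F z * dbar2 G z + F z * dbar12 G z) := by
  have hF' : Differentiable ℝ F := hF.differentiable two_ne_zero
  have hG' : Differentiable ℝ G := hG.differentiable two_ne_zero
  have hdF : Differentiable ℝ (dbarDir (0, 1) F) :=
    (contDiff_dbarDir (m := 1) hF (by norm_num) _).differentiable one_ne_zero
  have hdG : Differentiable ℝ (dbarDir (0, 1) G) :=
    (contDiff_dbarDir (m := 1) hG (by norm_num) _).differentiable one_ne_zero
  have hinner : dbarDir (0, 1) (fun z => F z * G z) =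
      fun z => dbarDir (0, 1) F z * G z + F z * dbarDir (0, 1) G z :=
    funext fun z => dbarDir_smul (0, 1) (hF' z) (hG' z)
  simp only [dbar1_eq_dbarDir, dbar2_eq_dbarDir, dbar12_eq_dbarDir, hinner]
  rw [dbarDir_add _ ((hdF.fun_mul hG') z) ((hF'.fun_mul hdG) z)]
  congr 1
  · exact dbarDir_smul _ (hdF z) (hG' z)
  · exact dbarDir_smul _ (hF' z) (hdG z)

lemma isFlatAlong_dbarDir_mul {X : Type*} [NormedAddCommGroup X] [NormedSpace ℂ X] {W : X → ℝ}
    {F G : X → ℂ} {e : X} (hF : Differentiable ℝ F) (hG : Differentiable ℝ G)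
    (hdF : IsFlatAlong W (dbarDir e F)) (hdG : IsFlatAlong W (dbarDir e G)) :
    IsFlatAlong W (dbarDir e fun x => F x * G x) := by
  have hmul : (dbarDir e fun x => F x * G x) =
      fun x => G x * dbarDir e F x + F x * dbarDir e G x := by
    ext x
    rw [mul_comm (G x)]
    exact dbarDir_smul _ (hF x) (hG x)
  rw [hmul]
  exact (hdF.continuous_mul hG.continuous).add (hdG.continuous_mul hF.continuous)

namespace IsSpecialAHExt2

variable {f g : ℝ × ℝ → ℂ} {F G : ℂ × ℂ → ℂ}

lemma contDiff (hF : IsSpecialAHExt2 f F) : ContDiff ℝ (⊤ : ℕ∞) F := hF.1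

lemma contDiff_two (hF : IsSpecialAHExt2 f F) : ContDiff ℝ 2 F :=
  contDiff_infty.1 hF.contDiff 2

lemma differentiable (hF : IsSpecialAHExt2 f F) : Differentiable ℝ F :=
  hF.contDiff_two.differentiable two_ne_zero

lemma continuous (hF : IsSpecialAHExt2 f F) : Continuous F := hF.contDiff.continuous

lemma hasCompactSupport (hF : IsSpecialAHExt2 f F) : HasCompactSupport F := hF.2.1

lemma apply_ofReal (hF : IsSpecialAHExt2 f F) (x y : ℝ) : F (x, y) = f (x, y) := hF.2.2.1 x y

lemma contDiff_dbar1 (hF : IsSpecialAHExt2 f F) : ContDiff ℝ (⊤ : ℕ∞) (dbar1 F) := by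
  rw [dbar1_eq_dbarDir]
  exact contDiff_dbarDir hF.contDiff (by simp) _

lemma contDiff_dbar2 (hF : IsSpecialAHExt2 f F) : ContDiff ℝ (⊤ : ℕ∞) (dbar2 F) := by
  rw [dbar2_eq_dbarDir]
  exact contDiff_dbarDir hF.contDiff (by simp) _

lemma isFlatAlong_dbar1 (hF : IsSpecialAHExt2 f F) :
    IsFlatAlong (fun z : ℂ × ℂ => z.1.im) (dbar1 F) := by
  refine ⟨hF.contDiff_dbar1.continuous, ?_, fun N => ?_⟩
  · rw [dbar1_eq_dbarDir]
    exact hasCompactSupport_dbarDir hF.hasCompactSupport _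
  · obtain ⟨C, hC⟩ := hF.2.2.2 N
    exact isBigO_top.2 ⟨C, fun z => by simpa using (hC z).1⟩

lemma isFlatAlong_dbar2 (hF : IsSpecialAHExt2 f F) :
    IsFlatAlong (fun z : ℂ × ℂ => z.2.im) (dbar2 F) := by
  refine ⟨hF.contDiff_dbar2.continuous, ?_, fun N => ?_⟩
  · rw [dbar2_eq_dbarDir]
    exact hasCompactSupport_dbarDir hF.hasCompactSupport _
  · obtain ⟨C, hC⟩ := hF.2.2.2 N
    exact isBigO_top.2 ⟨C, fun z => by simpa using (hC z).2.1⟩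

lemma isFlatAlong_dbar12 (hF : IsSpecialAHExt2 f F) :
    IsFlatAlong (fun z : ℂ × ℂ => z.1.im * z.2.im) (dbar12 F) := by
  have hdbar : dbar12 F = dbarDir (1, 0) (dbar2 F) := by
    rw [dbar12_eq_dbarDir, dbar2_eq_dbarDir]
  refine ⟨?_, ?_, fun N => ?_⟩
  · exact hdbar ▸ (contDiff_dbarDir (m := (⊤ : ℕ∞)) hF.contDiff_dbar2 (by simp) _).continuous
  · exact hdbar ▸ hasCompactSupport_dbarDir hF.isFlatAlong_dbar2.hasCompactSupport _
  · obtain ⟨C, hC⟩ := hF.2.2.2 N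
    exact isBigO_top.2 ⟨C, fun z => by simpa [abs_mul] using (hC z).2.2⟩

lemma isFlatAlong_dbar1_mul (hF : IsSpecialAHExt2 f F) (hG : IsSpecialAHExt2 g G) :
    IsFlatAlong (fun z : ℂ × ℂ => z.1.im) (dbar1 fun z => F z * G z) := by
  simpa only [dbar1_eq_dbarDir] using isFlatAlong_dbarDir_mul hF.differentiable hG.differentiable
    (dbar1_eq_dbarDir F ▸ hF.isFlatAlong_dbar1) (dbar1_eq_dbarDir G ▸ hG.isFlatAlong_dbar1)

lemma isFlatAlong_dbar2_mul (hF : IsSpecialAHExt2 f F) (hG : IsSpecialAHExt2 g G) :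
    IsFlatAlong (fun z : ℂ × ℂ => z.2.im) (dbar2 fun z => F z * G z) := by
  simpa only [dbar2_eq_dbarDir] using isFlatAlong_dbarDir_mul hF.differentiable hG.differentiable
    (dbar2_eq_dbarDir F ▸ hF.isFlatAlong_dbar2) (dbar2_eq_dbarDir G ▸ hG.isFlatAlong_dbar2)

lemma isFlatAlong_dbar12_mul (hF : IsSpecialAHExt2 f F) (hG : IsSpecialAHExt2 g G) :
    IsFlatAlong (fun z : ℂ × ℂ => z.1.im * z.2.im) (dbar12 fun z => F z * G z) := by
  have hdbar : (dbar12 fun z => F z * G z) = fun z => (G z * dbar12 F z + dbar1 G z * dbar2 F z) +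
      (dbar1 F z * dbar2 G z + F z * dbar12 G z) := by
    ext z
    rw [dbar12_mul hF.contDiff_two hG.contDiff_two]
    ring
  rw [hdbar]
  exact ((hF.isFlatAlong_dbar12.continuous_mul hG.continuous).add
    (hG.isFlatAlong_dbar1.mul hF.isFlatAlong_dbar2)).add
      ((hF.isFlatAlong_dbar1.mul hG.isFlatAlong_dbar2).add
        (hG.isFlatAlong_dbar12.continuous_mul hF.continuous))

theorem mul (hF : IsSpecialAHExt2 f F) (hG : IsSpecialAHExt2 g G) :
    IsSpecialAHExt2 (fun x => f x * g x) fun z => F z * G z := by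
  refine ⟨hF.contDiff.mul hG.contDiff, hF.hasCompactSupport.mul_right, fun x y => ?_, fun N => ?_⟩
  · simp only [hF.apply_ofReal, hG.apply_ofReal]
  obtain ⟨C₁, -, h₁⟩ := (hF.isFlatAlong_dbar1_mul hG).exists_norm_le N
  obtain ⟨C₂, -, h₂⟩ := (hF.isFlatAlong_dbar2_mul hG).exists_norm_le N
  obtain ⟨C₃, -, h₃⟩ := (hF.isFlatAlong_dbar12_mul hG).exists_norm_le N
  refine ⟨max C₁ (max C₂ C₃), fun z => ⟨(h₁ z).trans ?_, (h₂ z).trans ?_, (h₃ z).trans ?_⟩⟩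
  · gcongr
    simp
  · gcongr
    simp
  · rw [abs_mul]
    gcongr
    simp

end IsSpecialAHExt2

section TwoVariables

variable {A : Type*} [NormedRing A] [NormedAlgebra ℂ A] {R R₁ R₂ : ℂ → A}

lemma helfferSjostrand_add (hR : IsTemperatePseudoResolvent R) {α β : ℂ → ℂ}
    (hα : IsFlatAlong Complex.im α) (hβ : IsFlatAlong Complex.im β) :
    helfferSjostrand R (fun z => α z + β z) = helfferSjostrand R α + helfferSjostrand R β := by
  simp only [helfferSjostrand, add_smul]
  rw [integral_add (hα.smul_resolvent_im hR).integrable (hβ.smul_resolvent_im hR).integrable,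
    smul_add]

lemma commute_helfferSjostrand {a : A} {α : ℂ → ℂ} (hR : IsTemperatePseudoResolvent R)
    (hα : IsFlatAlong Complex.im α) (hcomm : ∀ z : ℂ, z.im ≠ 0 → Commute a (R z)) :
    Commute a (helfferSjostrand R α) := by
  have h_int := (hα.smul_resolvent_im hR).integrable (μ := volume)
  refine Commute.smul_right ?_ _
  rw [commute_iff_eq, ← integral_const_mul_of_integrable h_int,
    ← integral_mul_const_of_integrable h_int]
  refine integral_congr_ae ?_
  filter_upwards [ae_im_ne_zero] with z hz
  exact ((hcomm z hz).smul_right _).eq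

lemma isClosedEmbedding_slice_left (w : ℂ) :
    Topology.IsClosedEmbedding fun z : ℂ => (z, w) :=
  (Isometry.of_dist_eq fun x y => by simp [Prod.dist_eq]).isClosedEmbedding

lemma isClosedEmbedding_slice_right (z : ℂ) :
    Topology.IsClosedEmbedding fun w : ℂ => (z, w) :=
  (Isometry.of_dist_eq fun x y => by simp [Prod.dist_eq]).isClosedEmbedding

lemma IsFlatAlong.slice_left {u : ℂ × ℂ → ℂ}
    (hu : IsFlatAlong (fun p : ℂ × ℂ => p.1.im * p.2.im) u) (w : ℂ) :
    IsFlatAlong Complex.im fun z => u (z, w) := by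
  refine (hu.comp_isClosedEmbedding (isClosedEmbedding_slice_left w)).mono ?_
  simpa [Function.comp_def, mul_comm] using (isBigO_refl Complex.im ⊤).const_mul_left w.im

lemma IsFlatAlong.helfferSjostrand_slice (hR : IsTemperatePseudoResolvent R) {u : ℂ × ℂ → ℂ}
    (hu : IsFlatAlong (fun p : ℂ × ℂ => p.1.im * p.2.im) u) :
    IsFlatAlong Complex.im fun w => helfferSjostrand R fun z => u (z, w) :=
  (hu.smul_resolvent hR continuous_fst (Complex.continuous_im.comp continuous_snd)
    fun _ => rfl).integral_left.const_smul _

lemma cauchyTransform_helfferSjostrand_slice [CompleteSpace A]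
    (hR : IsTemperatePseudoResolvent R) {u : ℂ × ℂ → ℂ}
    (hu : IsFlatAlong (fun p : ℂ × ℂ => p.1.im * p.2.im) u) (w : ℂ) :
    cauchyTransform (fun w => helfferSjostrand R fun z => u (z, w)) w =
      helfferSjostrand R fun z => cauchyTransform (fun w => u (z, w)) w := by
  have hU := hu.smul_resolvent hR continuous_fst
    (Complex.continuous_im.comp continuous_snd) fun _ => rfl
  have hslice (z : ℂ) : cauchyTransform (fun w => u (z, w) • R z) w =
      cauchyTransform (fun w => u (z, w)) w • R z := by
    simp only [cauchyTransform, ← smul_assoc, integral_smul_const]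
  have hconst : cauchyTransform (fun w => helfferSjostrand R fun z => u (z, w)) w =
      (-(π : ℂ)⁻¹) • cauchyTransform (fun w => ∫ z, u (z, w) • R z) w := by
    simp only [cauchyTransform, helfferSjostrand]
    rw [← integral_smul (-(π : ℂ)⁻¹) fun v => (v - w)⁻¹ • ∫ z, u (z, v) • R z]
    congr 2 with v
    exact smul_comm _ _ _
  rw [hconst, cauchyTransform_integral hU.continuous hU.hasCompactSupport, helfferSjostrand]
  simp only [hslice]

lemma hasCompactSupport_helfferSjostrand_slice {u : ℂ × ℂ → ℂ} (hu : HasCompactSupport u) :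
    HasCompactSupport fun w => helfferSjostrand R fun z => u (z, w) := by
  refine HasCompactSupport.intro (hu.isCompact.image continuous_snd) fun w hw => ?_
  have hzero (z : ℂ) : u (z, w) = 0 :=
    image_eq_zero_of_notMem_tsupport fun h => hw ⟨(z, w), h, rfl⟩
  simp [helfferSjostrand, hzero]

/-- The two-variable Helffer–Sjöstrand integral of a special almost holomorphic extension `H`, with
arbitrary functions `R₁` and `R₂` in place of resolvents; `calc2 P₁ P₂` is the case of `res P₁` and
`res P₂`. -/
def jointCalculus (R₁ R₂ : ℂ → A) (H : ℂ × ℂ → ℂ) : A :=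
  (1 / (π : ℂ) ^ 2) • ∫ z : ℂ × ℂ, dbar12 H z • (R₁ z.1 * R₂ z.2)

lemma IsFlatAlong.smul_mul_resolvent (hR₁ : IsTemperatePseudoResolvent R₁)
    (hR₂ : IsTemperatePseudoResolvent R₂) {u : ℂ × ℂ → ℂ}
    (hu : IsFlatAlong (fun p : ℂ × ℂ => p.1.im * p.2.im) u) :
    IsFlatAlong (fun p : ℂ × ℂ => p.1.im * p.2.im) fun p => u p • (R₁ p.1 * R₂ p.2) := by
  have hU := hu.smul_resolvent hR₁ continuous_fst (Complex.continuous_im.comp continuous_snd)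
    fun _ => rfl
  simpa only [smul_eq_mul, smul_mul_assoc] using hU.smul_resolvent hR₂ continuous_snd
    (Complex.continuous_im.comp continuous_fst) fun p => mul_comm _ _

lemma jointCalculus_eq_helfferSjostrand (hR₁ : IsTemperatePseudoResolvent R₁)
    (hR₂ : IsTemperatePseudoResolvent R₂) {H : ℂ × ℂ → ℂ}
    (hH : IsFlatAlong (fun p : ℂ × ℂ => p.1.im * p.2.im) (dbar12 H)) :
    jointCalculus R₁ R₂ H =
      helfferSjostrand R₂ fun w => helfferSjostrand R₁ fun z => dbar12 H (z, w) := by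
  have hslice (w : ℂ) : ∫ z, dbar12 H (z, w) • (R₁ z * R₂ w) =
      (∫ z, dbar12 H (z, w) • R₁ z) * R₂ w := by
    rw [← integral_mul_const_of_integrable ((hH.slice_left w).smul_resolvent_im hR₁).integrable]
    simp only [smul_mul_assoc]
  rw [jointCalculus, Measure.volume_eq_prod,
    integral_prod_symm _ (hH.smul_mul_resolvent hR₁ hR₂).integrable]
  simp only [hslice, helfferSjostrand, smul_eq_mul, smul_mul_assoc, integral_smul, smul_smul]
  congr 1
  ring

namespace IsSpecialAHExt2

variable {f g : ℝ × ℝ → ℂ} {F G : ℂ × ℂ → ℂ}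

lemma isFlatAlong_dbar1_slice (hF : IsSpecialAHExt2 f F) (w : ℂ) :
    IsFlatAlong Complex.im fun z => dbar1 F (z, w) :=
  hF.isFlatAlong_dbar1.comp_isClosedEmbedding (isClosedEmbedding_slice_left w)

lemma cauchyTransform_dbar12_left (hF : IsSpecialAHExt2 f F) (w : ℂ) :
    cauchyTransform (fun z => dbar12 F (z, w)) = fun z => dbar2 F (z, w) := by
  have hdbar : (fun z => dbar12 F (z, w)) = dbarDir 1 fun z => dbar2 F (z, w) := by
    ext z
    rw [dbarDir_slice_left (hF.contDiff_dbar2.differentiable (by simp)), dbar12_eq_dbarDir,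
      dbar2_eq_dbarDir]
  rw [hdbar, cauchyTransform_dbarDir]
  · exact (contDiff_infty.1 hF.contDiff_dbar2 1).comp (contDiff_prodMk_left w)
  · exact hF.isFlatAlong_dbar2.hasCompactSupport.comp_isClosedEmbedding
      (isClosedEmbedding_slice_left w)

lemma cauchyTransform_dbar12_right (hF : IsSpecialAHExt2 f F) (z : ℂ) :
    cauchyTransform (fun w => dbar12 F (z, w)) = fun w => dbar1 F (z, w) := by
  have hdbar : (fun w => dbar12 F (z, w)) = dbarDir 1 fun w => dbar1 F (z, w) := by
    ext w
    rw [dbarDir_slice_right (hF.contDiff_dbar1.differentiable (by simp)), dbar12_eq_dbarDir,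
      dbarDir_comm hF.contDiff_two, dbar1_eq_dbarDir]
  rw [hdbar, cauchyTransform_dbarDir]
  · exact (contDiff_infty.1 hF.contDiff_dbar1 1).comp (contDiff_prodMk_right z)
  · exact hF.isFlatAlong_dbar1.hasCompactSupport.comp_isClosedEmbedding
      (isClosedEmbedding_slice_right z)

lemma cauchyTransform_dbar1_left (hF : IsSpecialAHExt2 f F) (w : ℂ) :
    cauchyTransform (fun z => dbar1 F (z, w)) = fun z => F (z, w) := by
  have hdbar : (fun z => dbar1 F (z, w)) = dbarDir 1 fun z => F (z, w) := by
    ext z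
    rw [dbarDir_slice_left hF.differentiable, dbar1_eq_dbarDir]
  rw [hdbar, cauchyTransform_dbarDir]
  · exact (contDiff_infty.1 hF.contDiff 1).comp (contDiff_prodMk_left w)
  · exact hF.hasCompactSupport.comp_isClosedEmbedding (isClosedEmbedding_slice_left w)

variable [CompleteSpace A]

lemma cauchyTransform_helfferSjostrand_dbar12 (hR : IsTemperatePseudoResolvent R)
    (hF : IsSpecialAHExt2 f F) (w : ℂ) :
    cauchyTransform (fun w => helfferSjostrand R fun z => dbar12 F (z, w)) w =
      helfferSjostrand R fun z => dbar1 F (z, w) := by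
  rw [cauchyTransform_helfferSjostrand_slice hR hF.isFlatAlong_dbar12]
  simp only [hF.cauchyTransform_dbar12_right]

lemma helfferSjostrand_dbar12_mul (hR : IsTemperatePseudoResolvent R) (hF : IsSpecialAHExt2 f F)
    (hG : IsSpecialAHExt2 g G) (w : ℂ) :
    (helfferSjostrand R fun z => dbar12 F (z, w)) * (helfferSjostrand R fun z => dbar1 G (z, w)) +
      (helfferSjostrand R fun z => dbar1 F (z, w)) *
        (helfferSjostrand R fun z => dbar12 G (z, w)) =
      helfferSjostrand R fun z => dbar12 (fun z => F z * G z) (z, w) := by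
  have hF₁ := hF.isFlatAlong_dbar1_slice w
  have hG₁ := hG.isFlatAlong_dbar1_slice w
  have hF₁₂ := hF.isFlatAlong_dbar12.slice_left w
  have hG₁₂ := hG.isFlatAlong_dbar12.slice_left w
  have hcont {u : ℂ × ℂ → ℂ} (hu : Continuous u) : Continuous fun z => u (z, w) :=
    hu.comp (Continuous.prodMk_left w)
  have hleft : IsFlatAlong Complex.im fun z =>
      dbar12 F (z, w) * G (z, w) + dbar2 F (z, w) * dbar1 G (z, w) := by
    simp only [mul_comm (dbar12 F _)]
    exact (hF₁₂.continuous_mul (hcont hG.continuous)).add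
      (hG₁.continuous_mul (hcont hF.contDiff_dbar2.continuous))
  have hright : IsFlatAlong Complex.im fun z =>
      dbar1 F (z, w) * dbar2 G (z, w) + F (z, w) * dbar12 G (z, w) := by
    simp only [mul_comm (dbar1 F _)]
    exact (hF₁.continuous_mul (hcont hG.contDiff_dbar2.continuous)).add
      (hG₁₂.continuous_mul (hcont hF.continuous))
  rw [helfferSjostrand_scalar_mul hR hF₁₂ hG₁, helfferSjostrand_scalar_mul hR hF₁ hG₁₂]
  simp only [hF.cauchyTransform_dbar12_left, hG.cauchyTransform_dbar12_left,
    hF.cauchyTransform_dbar1_left, hG.cauchyTransform_dbar1_left,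
    dbar12_mul hF.contDiff_two hG.contDiff_two]
  exact (helfferSjostrand_add hR hleft hright).symm

theorem jointCalculus_mul (hR₁ : IsTemperatePseudoResolvent R₁)
    (hR₂ : IsTemperatePseudoResolvent R₂)
    (hcomm : ∀ z w : ℂ, z.im ≠ 0 → w.im ≠ 0 → Commute (R₁ z) (R₂ w))
    (hF : IsSpecialAHExt2 f F) (hG : IsSpecialAHExt2 g G) :
    jointCalculus R₁ R₂ F * jointCalculus R₁ R₂ G = jointCalculus R₁ R₂ fun z => F z * G z := by
  rw [jointCalculus_eq_helfferSjostrand hR₁ hR₂ hF.isFlatAlong_dbar12,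
    jointCalculus_eq_helfferSjostrand hR₁ hR₂ hG.isFlatAlong_dbar12,
    jointCalculus_eq_helfferSjostrand hR₁ hR₂ (hF.mul hG).isFlatAlong_dbar12,
    helfferSjostrand_mul hR₂ (hF.isFlatAlong_dbar12.helfferSjostrand_slice hR₁)
      (hG.isFlatAlong_dbar12.helfferSjostrand_slice hR₁)]
  · simp only [hF.cauchyTransform_helfferSjostrand_dbar12 hR₁,
      hG.cauchyTransform_helfferSjostrand_dbar12 hR₁, hF.helfferSjostrand_dbar12_mul hR₁ hG]
  · exact fun w v hw => commute_helfferSjostrand hR₁ (hG.isFlatAlong_dbar12.slice_left v)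
      fun z hz => (hcomm z w hz hw).symm

lemma helfferSjostrand_dbar1_congr (hR : IsTemperatePseudoResolvent R)
    (hF : IsSpecialAHExt2 f F) (hG : IsSpecialAHExt2 f G) (y : ℝ) :
    (helfferSjostrand R fun z => dbar1 F (z, y)) = helfferSjostrand R fun z => dbar1 G (z, y) := by
  have hsupp {F : ℂ × ℂ → ℂ} (hF : IsSpecialAHExt2 f F) :
      HasCompactSupport (cauchyTransform fun z => dbar1 F (z, y)) := by
    rw [hF.cauchyTransform_dbar1_left]
    exact hF.hasCompactSupport.comp_isClosedEmbedding (isClosedEmbedding_slice_left _)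
  refine helfferSjostrand_congr hR (hF.isFlatAlong_dbar1_slice y) (hG.isFlatAlong_dbar1_slice y)
    (hsupp hF) (hsupp hG) fun x => ?_
  rw [hF.cauchyTransform_dbar1_left, hG.cauchyTransform_dbar1_left]
  exact (hF.apply_ofReal x y).trans (hG.apply_ofReal x y).symm

theorem jointCalculus_congr (hR₁ : IsTemperatePseudoResolvent R₁)
    (hR₂ : IsTemperatePseudoResolvent R₂) (hF : IsSpecialAHExt2 f F) (hG : IsSpecialAHExt2 f G) :
    jointCalculus R₁ R₂ F = jointCalculus R₁ R₂ G := by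
  have hsupp {F : ℂ × ℂ → ℂ} (hF : IsSpecialAHExt2 f F) : HasCompactSupport
      (cauchyTransform fun w => helfferSjostrand R₁ fun z => dbar12 F (z, w)) := by
    rw [funext (hF.cauchyTransform_helfferSjostrand_dbar12 hR₁)]
    exact hasCompactSupport_helfferSjostrand_slice hF.isFlatAlong_dbar1.hasCompactSupport
  rw [jointCalculus_eq_helfferSjostrand hR₁ hR₂ hF.isFlatAlong_dbar12,
    jointCalculus_eq_helfferSjostrand hR₁ hR₂ hG.isFlatAlong_dbar12]
  refine helfferSjostrand_congr hR₂ (hF.isFlatAlong_dbar12.helfferSjostrand_slice hR₁)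
    (hG.isFlatAlong_dbar12.helfferSjostrand_slice hR₁) (hsupp hF) (hsupp hG) fun y => ?_
  rw [hF.cauchyTransform_helfferSjostrand_dbar12 hR₁,
    hG.cauchyTransform_helfferSjostrand_dbar12 hR₁, hF.helfferSjostrand_dbar1_congr hR₁ hG]

end IsSpecialAHExt2

end TwoVariables

section Resolvent

variable {B : Type*} [NormedAddCommGroup B] [NormedSpace ℂ B]

lemma RealSpectrum.isUnit_smul_one_sub {P : B →L[ℂ] B} (hP : RealSpectrum P) {z : ℂ}
    (hz : z.im ≠ 0) : IsUnit (z • (1 : B →L[ℂ] B) - P) := by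
  have h := spectrum.notMem_iff.1 fun hmem => hz (hP z hmem)
  rwa [Algebra.algebraMap_eq_smul_one] at h

lemma RealSpectrum.res_sub_res {P : B →L[ℂ] B} (hP : RealSpectrum P) {z w : ℂ}
    (hz : z.im ≠ 0) (hw : w.im ≠ 0) : res P z - res P w = (w - z) • (res P z * res P w) := by
  have hz_cancel : res P z * (z • 1 - P) = 1 :=
    Ring.inverse_mul_cancel _ (hP.isUnit_smul_one_sub hz)
  have hw_cancel : (w • 1 - P) * res P w = 1 :=
    Ring.mul_inverse_cancel _ (hP.isUnit_smul_one_sub hw)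
  calc res P z - res P w
      = res P z * ((w • 1 - P) * res P w) - res P z * (z • 1 - P) * res P w := by
        rw [hw_cancel, hz_cancel, mul_one, one_mul]
    _ = res P z * ((w • 1 - P) - (z • 1 - P)) * res P w := by
        rw [← mul_assoc, ← sub_mul, ← mul_sub]
    _ = (w - z) • (res P z * res P w) := by
        rw [sub_sub_sub_cancel_right, ← sub_smul, mul_smul_comm, mul_one, smul_mul_assoc]

lemma TemperateResolventLoc.exists_norm_res_mul_pow_le {P : B →L[ℂ] B}
    (hP : TemperateResolventLoc P) (M : ℝ) :
    ∃ (C : ℝ) (n : ℕ), ∀ z : ℂ, z.im ≠ 0 → ‖z‖ ≤ M → ‖res P z‖ * |z.im| ^ n ≤ C := by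
  obtain ⟨C, N, hC, -, h⟩ := hP (max M 1) (by positivity)
  refine ⟨C * max M 1 ^ (⌈N⌉₊ - N), ⌈N⌉₊, fun z hz hzM => ?_⟩
  have hpos : 0 < |z.im| := abs_pos.2 hz
  have hzM' : ‖z‖ ≤ max M 1 := hzM.trans (le_max_left _ _)
  calc ‖res P z‖ * |z.im| ^ ⌈N⌉₊ ≤ C * |z.im| ^ (-N) * |z.im| ^ ⌈N⌉₊ := by
        gcongr
        exact h z hz hzM'
    _ = C * |z.im| ^ (⌈N⌉₊ - N) := by
        rw [mul_assoc, ← Real.rpow_natCast, ← Real.rpow_add hpos, neg_add_eq_sub]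
    _ ≤ C * max M 1 ^ (⌈N⌉₊ - N) := by
        gcongr
        · exact sub_nonneg.2 (Nat.le_ceil N)
        · exact (Complex.abs_im_le_norm z).trans hzM'

lemma isTemperatePseudoResolvent_res {P : B →L[ℂ] B} (hspec : RealSpectrum P)
    (hres : TemperateResolventLoc P) : IsTemperatePseudoResolvent (res P) :=
  ⟨hres.exists_norm_res_mul_pow_le, hspec.res_sub_res⟩

lemma commute_res {P₁ P₂ : B →L[ℂ] B} (h : Commute P₁ P₂) (z w : ℂ) :
    Commute (res P₁ z) (res P₂ w) :=
  Commute.ringInverse_ringInverse <| ((Commute.one_left _).smul_left z).sub_left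
    (((Commute.one_right _).smul_right w).sub_right h)

end Resolvent

theorem multiplicativity_commuting_general {A : Type*} [NormedRing A] [NormedAlgebra ℂ A]
    [CompleteSpace A] {R₁ R₂ : ℂ → A} (hR₁ : IsTemperatePseudoResolvent R₁)
    (hR₂ : IsTemperatePseudoResolvent R₂)
    (hcomm : ∀ z w : ℂ, z.im ≠ 0 → w.im ≠ 0 → Commute (R₁ z) (R₂ w))
    {f g : ℝ × ℝ → ℂ} {F G H : ℂ × ℂ → ℂ} (hF : IsSpecialAHExt2 f F) (hG : IsSpecialAHExt2 g G)
    (hH : IsSpecialAHExt2 (fun x => f x * g x) H) :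
    jointCalculus R₁ R₂ F * jointCalculus R₁ R₂ G = jointCalculus R₁ R₂ H :=
  (hF.jointCalculus_mul hR₁ hR₂ hcomm hG).trans ((hF.mul hG).jointCalculus_congr hR₁ hR₂ hH)

/-- Proposition 7.1 (case `m = 2`): multiplicativity of the calculus for a pair of
commuting operators: `f(P₁,P₂) ∘ g(P₁,P₂) = (fg)(P₁,P₂)`. -/
theorem multiplicativity_commuting {B : Type*} [NormedAddCommGroup B] [NormedSpace ℂ B]
    [CompleteSpace B] (P₁ P₂ : B →L[ℂ] B)
    (hcomm : P₁ * P₂ = P₂ * P₁)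
    (hspec₁ : RealSpectrum P₁) (hres₁ : TemperateResolventLoc P₁)
    (hspec₂ : RealSpectrum P₂) (hres₂ : TemperateResolventLoc P₂)
    (f g : ℝ × ℝ → ℂ)
    (hf_smooth : ContDiff ℝ (⊤ : ℕ∞) f) (hf_supp : HasCompactSupport f)
    (hg_smooth : ContDiff ℝ (⊤ : ℕ∞) g) (hg_supp : HasCompactSupport g)
    (F G H : ℂ × ℂ → ℂ)
    (hF : IsSpecialAHExt2 f F) (hG : IsSpecialAHExt2 g G)
    (hH : IsSpecialAHExt2 (fun x : ℝ × ℝ => f x * g x) H) :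
    calc2 P₁ P₂ F * calc2 P₁ P₂ G = calc2 P₁ P₂ H := by
  exact multiplicativity_commuting_general (isTemperatePseudoResolvent_res hspec₁ hres₁)
    (isTemperatePseudoResolvent_res hspec₂ hres₂) (fun z w _ _ => commute_res hcomm z w) hF hG hH
end
end

section
/- Let P be as in the context and let f ∈ C_0^∞(ℝ) with supp f ∩ σ(P) = ∅. Then for every almost holomorphic extension f̃ of f, −(1/π)∫_ℂ (∂f̃/∂z̄)(z)·(z·1 − P)⁻¹ L(dz) = 0. -/
open MeasureTheory Complex Real

noncomputable section

/-- The Cauchy–Riemann operator `∂F/∂z̄ = (∂F/∂x + i ∂F/∂y)/2`. -/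
def dbar (F : ℂ → ℂ) (z : ℂ) : ℂ :=
  (fderiv ℝ F z 1 + Complex.I * fderiv ℝ F z Complex.I) / 2

/-- `F` is an almost holomorphic extension of `f ∈ C_0^∞(ℝ)`. -/
def IsAHExt (f : ℝ → ℂ) (F : ℂ → ℂ) : Prop :=
  ContDiff ℝ (⊤ : ℕ∞) F ∧ HasCompactSupport F ∧ (∀ x : ℝ, F x = f x) ∧
    ∀ N : ℕ, ∃ C : ℝ, ∀ z : ℂ, ‖dbar F z‖ ≤ C * |z.im| ^ N

/-!
Write `R z = (z - P)⁻¹`. Off `σ(P)` the product `F R` is differentiable and `∂̄(F R) = (∂̄F) R`.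
Near a real point outside `supp f`, in particular near `σ(P)`, `F` vanishes on the axis, and there
`∂F/∂y = i ∂F/∂x - 2i ∂̄F` turns infinite order vanishing of `∂̄F` into infinite order vanishing
of `F`, by induction on the order: `∂F/∂x` satisfies the same hypotheses as `F`. This absorbs the
polynomial blow-up of `R`, so `F R` is differentiable across `σ(P)` as well, and Green's formula
on a large rectangle shows that the integral of `∂̄(F R)` is zero.
-/

open Asymptotics Filter Topology
open scoped ContDiff

theorem isBigO_of_isBigO_inf_principal {α E F : Type*} [NormedAddCommGroup E]
    [NormedAddCommGroup F] {l : Filter α} {s : Set α} {u : α → E} {v : α → F}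
    (hs : u =O[l ⊓ 𝓟 s] v) (hsc : ∀ᶠ a in l, a ∉ s → u a = 0) : u =O[l] v := by
  have hcompl : u =O[l ⊓ 𝓟 sᶜ] v :=
    EventuallyEq.trans_isBigO (eventually_inf_principal.2 hsc) (isBigO_zero v _)
  simpa [← inf_sup_left] using hs.sup hcompl

theorem isBigO_sub_sub_fderiv_apply {V E : Type*} [NormedAddCommGroup V] [NormedSpace ℝ V]
    [NormedAddCommGroup E] [NormedSpace ℝ E] {g : V → E} {x : V} (hg : ContDiffAt ℝ 2 g x) :
    (fun p : V × V => g (p.1 + p.2) - g p.1 - fderiv ℝ g p.1 p.2)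
      =O[𝓝 (x, 0)] fun p => ‖p.2‖ ^ 2 := by
  obtain ⟨K, s, hs, hK⟩ := (hg.fderiv_right (m := 1) le_rfl).exists_lipschitzOnWith
  have hdiff : ∀ᶠ y in 𝓝 x, DifferentiableAt ℝ g y :=
    (hg.eventually (by simp)).mono fun y hy => hy.differentiableAt (by simp)
  obtain ⟨r, hr, hball⟩ := Metric.eventually_nhds_iff_ball.1 (hdiff.and hs)
  have hfst : ∀ᶠ p : V × V in 𝓝 (x, 0), p.1 ∈ Metric.ball x r :=
    continuousAt_fst.eventually (Metric.ball_mem_nhds x hr)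
  have hsum : ∀ᶠ p : V × V in 𝓝 (x, 0), p.1 + p.2 ∈ Metric.ball x r :=
    (continuous_add.tendsto' (x, (0 : V)) x (add_zero x)).eventually (Metric.ball_mem_nhds x hr)
  refine IsBigO.of_bound K ?_
  filter_upwards [hfst, hsum] with ⟨y, v⟩ hy hyv
  have hseg : segment ℝ y (y + v) ⊆ Metric.ball x r := (convex_ball x r).segment_subset hy hyv
  have hbound : ∀ a ∈ segment ℝ y (y + v), ‖fderiv ℝ g a - fderiv ℝ g y‖ ≤ K * ‖v‖ := by
    intro a ha
    have hav : ‖a - y‖ ≤ ‖v‖ := by simpa using norm_sub_le_of_mem_segment ha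
    exact (hK.norm_sub_le (hball a (hseg ha)).2 (hball y hy).2).trans (by gcongr)
  have htaylor := Convex.norm_image_sub_le_of_norm_fderiv_le'
    (fun a ha => (hball a (hseg ha)).1) hbound (convex_segment _ _)
    (left_mem_segment ℝ y (y + v)) (right_mem_segment ℝ y (y + v))
  simpa [sq, mul_assoc] using htaylor

section RealAxis

variable {E : Type*} [NormedAddCommGroup E] [NormedSpace ℝ E] {g : ℂ → E} {x : ℝ}

theorem eventually_fderiv_apply_one_eq_zero (hg : ∀ᶠ z in 𝓝 (x : ℂ), DifferentiableAt ℝ g z)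
    (hreal : ∀ᶠ z in 𝓝 (x : ℂ), z.im = 0 → g z = 0) :
    ∀ᶠ z in 𝓝 (x : ℂ), z.im = 0 → fderiv ℝ g z 1 = 0 := by
  filter_upwards [hg, hreal.eventually_nhds] with z hz hzero him
  have hshift : Tendsto (fun t : ℝ => z + t) (𝓝 0) (𝓝 z) :=
    Continuous.tendsto' (by fun_prop) _ _ (by simp)
  have hline : HasLineDerivAt ℝ g (fderiv ℝ g z 1) z 1 := hz.hasFDerivAt.hasLineDerivAt 1
  refine hline.unique ((hasDerivAt_const (0 : ℝ) (0 : E)).congr_of_eventuallyEq ?_)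
  filter_upwards [hshift.eventually hzero] with t ht
  simpa [him] using ht

theorem isBigO_im_pow_succ_of_isBigO_fderiv_apply_I {N : ℕ}
    (hg : ∀ᶠ z in 𝓝 (x : ℂ), DifferentiableAt ℝ g z)
    (hreal : ∀ᶠ z in 𝓝 (x : ℂ), z.im = 0 → g z = 0)
    (hI : (fun z => fderiv ℝ g z I) =O[𝓝 (x : ℂ)] fun z => z.im ^ N) :
    g =O[𝓝 (x : ℂ)] fun z => z.im ^ (N + 1) := by
  obtain ⟨C, hC, hbound⟩ := hI.exists_nonneg
  obtain ⟨r, hr, hball⟩ := Metric.eventually_nhds_iff_ball.1 (hg.and hbound.bound)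
  have hre : Tendsto (fun z : ℂ => (z.re : ℂ)) (𝓝 (x : ℂ)) (𝓝 (x : ℂ)) :=
    Continuous.tendsto' (by fun_prop) _ _ (by simp)
  refine IsBigO.of_bound C ?_
  filter_upwards [hre.eventually hreal, Metric.ball_mem_nhds (x : ℂ) hr] with z hzero hz
  have hmem : ∀ t : ℝ, |t| ≤ |z.im| → (z.re + t * I : ℂ) ∈ Metric.ball (x : ℂ) r := by
    intro t ht
    refine lt_of_le_of_lt ?_ (Metric.mem_ball.1 hz)
    rw [dist_eq_re_im, dist_eq_re_im]
    exact Real.sqrt_le_sqrt (by simpa using sq_le_sq.2 ht)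
  have hvert : ∀ t ∈ Metric.closedBall (0 : ℝ) |z.im|,
      HasDerivAt (fun t : ℝ => g (z.re + t * I)) (fderiv ℝ g (z.re + t * I) I) t := fun t ht =>
    (hball _ (hmem t (by simpa using ht))).1.hasFDerivAt.comp_hasDerivAt t
      (by simpa using (ofRealCLM.hasDerivAt.mul_const I).const_add (z.re : ℂ))
  have hderiv : ∀ t ∈ Metric.closedBall (0 : ℝ) |z.im|,
      ‖fderiv ℝ g (z.re + t * I) I‖ ≤ C * |z.im| ^ N := by
    intro t ht
    have ht' : |t| ≤ |z.im| := by simpa using ht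
    calc ‖fderiv ℝ g (z.re + t * I) I‖ ≤ C * |t| ^ N := by simpa using (hball _ (hmem t ht')).2
      _ ≤ C * |z.im| ^ N := by gcongr
  have hmean := (convex_closedBall (0 : ℝ) |z.im|).norm_image_sub_le_of_norm_hasDerivWithin_le
    (x := 0) (y := z.im) (fun t ht => (hvert t ht).hasDerivWithinAt) hderiv (by simp) (by simp)
  simpa [hzero, pow_succ, mul_assoc] using hmean

end RealAxis

/-- `g` vanishes to infinite order along the real axis near `x`. The constant in
`‖g z‖ ≤ C * |z.im| ^ N` and the neighbourhood of `x` on which it holds may depend on `N`. -/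
def IsFlatAt {E : Type*} [NormedAddCommGroup E] (g : ℂ → E) (x : ℝ) : Prop :=
  ∀ N : ℕ, g =O[𝓝 (x : ℂ)] fun z => z.im ^ N

/-- `R` grows at most polynomially in `1 / |z.im|` as `z` tends to `x` off the real axis; its values
on the real axis are irrelevant. -/
def IsTemperateAt {E : Type*} [NormedAddCommGroup E] (R : ℂ → E) (x : ℝ) : Prop :=
  ∃ N : ℕ, R =O[𝓝[{z | z.im ≠ 0}] (x : ℂ)] fun z => (z.im ^ N)⁻¹

namespace IsFlatAt

theorem eventually_eq_zero {E : Type*} [NormedAddCommGroup E] {g : ℂ → E} {x : ℝ}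
    (hg : IsFlatAt g x) : ∀ᶠ z in 𝓝 (x : ℂ), z.im = 0 → g z = 0 := by
  obtain ⟨C, hC⟩ := (hg 1).bound
  filter_upwards [hC] with z hz him
  simpa [him] using hz

section RealSpace

variable {E : Type*} [NormedAddCommGroup E] [NormedSpace ℝ E] {g : ℂ → E} {x : ℝ}

theorem hasFDerivAt_zero (hg : IsFlatAt g x) : HasFDerivAt g (0 : ℂ →L[ℝ] E) (x : ℂ) := by
  have him : (fun z : ℂ => z.im ^ 2) =O[𝓝 (x : ℂ)] fun z => ‖z - x‖ ^ 2 :=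
    IsBigO.of_bound 1 (Eventually.of_forall fun z => by
      simpa using pow_le_pow_left₀ (abs_nonneg _) (abs_im_le_norm (z - x)) 2)
  exact ((hg 2).trans him).hasFDerivAt one_lt_two

-- Landau–Kolmogorov trick: compare the derivative with the difference quotient of real step
-- `z.im ^ N`, which does not change the imaginary part.
theorem isBigO_im_pow_smul_fderiv_apply_one {N : ℕ} (hN : N ≠ 0) (hg : IsFlatAt g x)
    (hsmooth : ContDiffAt ℝ 2 g x) :
    (fun z => z.im ^ N • fderiv ℝ g z 1) =O[𝓝 (x : ℂ)] fun z => z.im ^ (2 * N) := by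
  have hstep : Tendsto (fun z : ℂ => ((z.im ^ N : ℝ) : ℂ)) (𝓝 (x : ℂ)) (𝓝 0) :=
    Continuous.tendsto' (by fun_prop) _ _ (by simp [hN])
  have hsum : Tendsto (fun z : ℂ => z + (z.im ^ N : ℝ)) (𝓝 (x : ℂ)) (𝓝 (x : ℂ)) := by
    simpa using tendsto_id.add hstep
  have hshift : (fun z => g (z + (z.im ^ N : ℝ))) =O[𝓝 (x : ℂ)] fun z => z.im ^ (2 * N) :=
    ((hg (2 * N)).comp_tendsto hsum).congr_right fun z => by
      simp only [Function.comp_apply, add_im, ofReal_im, add_zero]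
  have hrem : (fun z => g (z + (z.im ^ N : ℝ)) - g z - fderiv ℝ g z (z.im ^ N : ℝ))
      =O[𝓝 (x : ℂ)] fun z => z.im ^ (2 * N) :=
    ((isBigO_sub_sub_fderiv_apply hsmooth).comp_tendsto
      (tendsto_id.prodMk_nhds hstep)).congr_right fun z => by
        simp only [Function.comp_apply, norm_real, norm_eq_abs, sq_abs, ← pow_mul, mul_comm]
  refine ((hshift.sub (hg (2 * N))).sub hrem).congr_left fun z => ?_
  rw [sub_sub_cancel, ← map_smul, real_smul, mul_one]

theorem fderiv_apply_one (hg : IsFlatAt g x) (hsmooth : ContDiffAt ℝ 2 g x) :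
    IsFlatAt (fun z => fderiv ℝ g z 1) x := by
  intro N
  rcases eq_or_ne N 0 with rfl | hN
  · have hcont : ContinuousAt (fun z => fderiv ℝ g z 1) x :=
      (hsmooth.continuousAt_fderiv (by simp)).clm_apply continuousAt_const
    simpa using hcont.tendsto.isBigO_one ℝ
  have hdiff : ∀ᶠ z in 𝓝 (x : ℂ), DifferentiableAt ℝ g z :=
    (hsmooth.eventually (by simp)).mono fun z hz => hz.differentiableAt (by simp)
  refine isBigO_of_isBigO_inf_principal (s := {z : ℂ | z.im ≠ 0}) ?_
    (by simpa using eventually_fderiv_apply_one_eq_zero hdiff hg.eventually_eq_zero)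
  have hquot := (isBigO_refl (fun z : ℂ => (z.im ^ N)⁻¹) (𝓝[{z | z.im ≠ 0}] (x : ℂ))).smul
    ((hg.isBigO_im_pow_smul_fderiv_apply_one hN hsmooth).mono inf_le_left)
  refine hquot.congr' ?_ ?_ <;> filter_upwards [self_mem_nhdsWithin] with z hz
  · exact inv_smul_smul₀ (pow_ne_zero N hz) _
  · rw [smul_eq_mul, two_mul, pow_add, inv_mul_cancel_left₀ (pow_ne_zero N hz)]

end RealSpace

theorem smul_of_isTemperateAt {E : Type*} [NormedAddCommGroup E] [NormedSpace ℂ E] {g : ℂ → ℂ}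
    {R : ℂ → E} {x : ℝ} (hg : IsFlatAt g x) (hR : IsTemperateAt R x) :
    IsFlatAt (fun z => g z • R z) x := by
  obtain ⟨N, hR⟩ := hR
  intro k
  refine isBigO_of_isBigO_inf_principal (s := {z : ℂ | z.im ≠ 0}) ?_ ?_
  · refine (((hg (k + N)).mono inf_le_left).smul hR).congr' EventuallyEq.rfl ?_
    filter_upwards [self_mem_nhdsWithin] with z hz
    rw [smul_eq_mul, pow_add, mul_inv_cancel_right₀ (pow_ne_zero N hz)]
  · filter_upwards [hg.eventually_eq_zero] with z hz him
    rw [hz (not_not.1 him), zero_smul]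

end IsFlatAt

section Dbar

variable {g : ℂ → ℂ}

theorem contDiff_dbar {m n : ℕ∞ω} (hg : ContDiff ℝ n g) (hmn : m + 1 ≤ n) :
    ContDiff ℝ m (dbar g) := by
  have hfderiv : ContDiff ℝ m (fderiv ℝ g) := hg.fderiv_right hmn
  have hpartial : ∀ v : ℂ, ContDiff ℝ m fun z => fderiv ℝ g z v := fun v =>
    hfderiv.clm_apply contDiff_const
  exact ((hpartial 1).add (contDiff_const.mul (hpartial I))).div_const 2

theorem hasCompactSupport_dbar (hg : HasCompactSupport g) : HasCompactSupport (dbar g) :=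
  (hg.fderiv ℝ).mono fun z hz hzero => hz (by simp [dbar, hzero])

theorem fderiv_apply_I_eq (z : ℂ) :
    fderiv ℝ g z I = I * fderiv ℝ g z 1 - 2 * I * dbar g z := by
  unfold dbar
  linear_combination fderiv ℝ g z I * I_sq

theorem dbar_fderiv_apply {z : ℂ} (hg : ContDiffAt ℝ 2 g z) (v : ℂ) :
    dbar (fun w => fderiv ℝ g w v) z = fderiv ℝ (dbar g) z v := by
  have hdiff : DifferentiableAt ℝ (fderiv ℝ g) z :=
    (hg.fderiv_right (m := 1) le_rfl).differentiableAt one_ne_zero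
  have hsymm : IsSymmSndFDerivAt ℝ g z := hg.isSymmSndFDerivAt (by simp)
  have hpartial : ∀ u : ℂ, HasFDerivAt (fun w => fderiv ℝ g w u)
      ((fderiv ℝ (fderiv ℝ g) z).flip u) z := fun u => by
    simpa using hdiff.hasFDerivAt.clm_apply (hasFDerivAt_const u z)
  have hdbar : HasFDerivAt (dbar g) ((2 : ℂ)⁻¹ • ((fderiv ℝ (fderiv ℝ g) z).flip 1 +
      I • (fderiv ℝ (fderiv ℝ g) z).flip I)) z := by
    have hsum := ((hpartial 1).fun_add ((hpartial I).fun_const_smul I)).fun_const_smul (2 : ℂ)⁻¹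
    unfold dbar
    simpa only [div_eq_inv_mul, smul_eq_mul] using hsum
  rw [hdbar.fderiv, dbar, (hpartial v).fderiv]
  simp [hsymm.eq v 1, hsymm.eq v I, div_eq_inv_mul, mul_add]

theorem isFlatAt_of_isFlatAt_dbar {x : ℝ} (hg : ContDiff ℝ ∞ g) (hdbar : IsFlatAt (dbar g) x)
    (hreal : ∀ᶠ z in 𝓝 (x : ℂ), z.im = 0 → g z = 0) : IsFlatAt g x := by
  intro N
  induction N generalizing g with
  | zero => simpa using (hg.continuous.tendsto (x : ℂ)).isBigO_one ℝ
  | succ N ih =>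
    have hdiff : ∀ᶠ z in 𝓝 (x : ℂ), DifferentiableAt ℝ g z :=
      Eventually.of_forall (hg.differentiable (by simp))
    have hsmooth : ContDiff ℝ ∞ fun z => fderiv ℝ g z 1 :=
      (hg.fderiv_right (m := ∞) (by simp)).clm_apply contDiff_const
    have hdbar' : IsFlatAt (dbar fun z => fderiv ℝ g z 1) x := by
      have hcomm : dbar (fun z => fderiv ℝ g z 1) = fun z => fderiv ℝ (dbar g) z 1 :=
        funext fun z => dbar_fderiv_apply (contDiff_infty.1 hg 2).contDiffAt 1
      rw [hcomm]
      exact hdbar.fderiv_apply_one (contDiff_infty.1 (contDiff_dbar hg (by simp)) 2).contDiffAt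
    have hone : (fun z => fderiv ℝ g z 1) =O[𝓝 (x : ℂ)] fun z => z.im ^ N :=
      ih hsmooth hdbar' (eventually_fderiv_apply_one_eq_zero hdiff hreal)
    refine isBigO_im_pow_succ_of_isBigO_fderiv_apply_I hdiff hreal ?_
    simp only [fderiv_apply_I_eq]
    exact (hone.const_mul_left I).sub ((hdbar N).const_mul_left (2 * I))

end Dbar

theorem integral_eq_intervalIntegral_of_support_subset_ball {E : Type*} [NormedAddCommGroup E]
    [NormedSpace ℝ E] {H : ℂ → E} {A : ℝ}
    (hH : Integrable H) (hsupp : Function.support H ⊆ Metric.ball 0 A) :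
    ∫ z, H z = ∫ x : ℝ in -A..A, ∫ y : ℝ in -A..A, H (x + y * I) := by
  have hre : ∀ x y : ℝ, H (x + y * I) ≠ 0 → x ∈ Set.Ioc (-A) A := fun x y h => by
    have hlt := (abs_re_le_norm _).trans_lt (mem_ball_zero_iff.1 (hsupp h))
    exact Set.Ioo_subset_Ioc_self (abs_lt.1 (by simpa using hlt))
  have him : ∀ x y : ℝ, H (x + y * I) ≠ 0 → y ∈ Set.Ioc (-A) A := fun x y h => by
    have hlt := (abs_im_le_norm _).trans_lt (mem_ball_zero_iff.1 (hsupp h))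
    exact Set.Ioo_subset_Ioc_self (abs_lt.1 (by simpa using hlt))
  have hinner : ∀ x : ℝ, ∫ y : ℝ in -A..A, H (x + y * I) = ∫ y : ℝ, H (x + y * I) := fun x =>
    intervalIntegral.integral_eq_integral_of_support_subset fun y hy => him x y hy
  have houter : Function.support (fun x : ℝ => ∫ y : ℝ, H (x + y * I)) ⊆ Set.Ioc (-A) A := by
    intro x hx
    by_contra hxA
    exact hx (integral_eq_zero_of_ae (ae_of_all _ fun y => by_contra fun h => hxA (hre x y h)))
  have hvol := volume_preserving_equiv_real_prod.symm
  simp_rw [hinner]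
  rw [intervalIntegral.integral_eq_integral_of_support_subset houter,
    ← hvol.integral_comp' (f := measurableEquivRealProd.symm) H, Measure.volume_eq_prod,
    integral_prod (fun p => H (measurableEquivRealProd.symm p))
      (hvol.integrable_comp_of_integrable hH)]
  simp only [measurableEquivRealProd_symm_apply, mk_eq_add_mul_I]

theorem integral_I_smul_fderiv_one_sub_fderiv_I_eq_zero {E : Type*} [NormedAddCommGroup E]
    [NormedSpace ℂ E] {G : ℂ → E} (hG : Differentiable ℝ G) (hsupp : HasCompactSupport G)
    (hint : Integrable fun z => I • fderiv ℝ G z 1 - fderiv ℝ G z I) :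
    ∫ z, (I • fderiv ℝ G z 1 - fderiv ℝ G z I) = 0 := by
  obtain ⟨A, hA⟩ := hsupp.isCompact.isBounded.subset_ball 0
  have hboundary : ∀ z : ℂ, |A| ≤ |z.re| ∨ |A| ≤ |z.im| → G z = 0 := by
    intro z hz
    refine image_eq_zero_of_notMem_tsupport fun hmem => ?_
    have hlt : ‖z‖ < |A| := (mem_ball_zero_iff.1 (hA hmem)).trans_le (le_abs_self A)
    rcases hz with hz | hz
    · exact (hz.trans (abs_re_le_norm z)).not_gt hlt
    · exact (hz.trans (abs_im_le_norm z)).not_gt hlt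
  have hfderiv : Function.support (fun z => I • fderiv ℝ G z 1 - fderiv ℝ G z I) ⊆
      Metric.ball 0 A := by
    refine Set.Subset.trans (fun z hz => ?_) ((support_fderiv_subset ℝ).trans hA)
    exact fun hzero => hz (by simp [hzero])
  have hgreen := integral_boundary_rect_of_differentiableOn_real G (⟨-A, -A⟩ : ℂ) ⟨A, A⟩
    hG.differentiableOn hint.integrableOn
  rw [integral_eq_intervalIntegral_of_support_subset_ball hint hfderiv, ← hgreen]
  simp [hboundary]

theorem I_smul_fderiv_one_sub_fderiv_I_smul {E : Type*} [NormedAddCommGroup E] [NormedSpace ℂ E]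
    {F : ℂ → ℂ} {R : ℂ → E} {z : ℂ} (hF : DifferentiableAt ℝ F z) (hR : DifferentiableAt ℂ R z) :
    I • fderiv ℝ (fun w => F w • R w) z 1 - fderiv ℝ (fun w => F w • R w) z I =
      (2 * I) • dbar F z • R z := by
  have hprod := hF.hasFDerivAt.fun_smul (hR.hasDerivAt.hasFDerivAt.restrictScalars ℝ)
  rw [hprod.fderiv]
  simp only [add_apply, smul_apply, ContinuousLinearMap.smulRight_apply,
    ContinuousLinearMap.coe_restrictScalars', ContinuousLinearMap.toSpanSingleton_apply,
    one_smul, fderiv_apply_I_eq]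
  module

theorem integral_dbar_smul_eq_zero {E : Type*} [NormedAddCommGroup E] [NormedSpace ℂ E]
    {F : ℂ → ℂ} {R : ℂ → E} {S : Set ℝ} (hF : ContDiff ℝ 1 F) (hsupp : HasCompactSupport F)
    (hR : ∀ z ∉ ofReal '' S, DifferentiableAt ℂ R z) (htemp : ∀ x ∈ S, IsTemperateAt R x)
    (hflat : ∀ x ∈ S, IsFlatAt F x) (hdbar : ∀ x ∈ S, IsFlatAt (dbar F) x) :
    ∫ z, dbar F z • R z = 0 := by
  have hcont : Continuous fun z => dbar F z • R z := by
    refine continuous_iff_continuousAt.2 fun z => ?_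
    by_cases hz : z ∈ ofReal '' S
    · obtain ⟨x, hx, rfl⟩ := hz
      exact ((hdbar x hx).smul_of_isTemperateAt (htemp x hx)).hasFDerivAt_zero.continuousAt
    · have hdbarF : Continuous (dbar F) := (contDiff_dbar (m := 0) hF (by simp)).continuous
      exact hdbarF.continuousAt.smul (hR z hz).continuousAt
  have hderiv : ∀ z, DifferentiableAt ℝ (fun w => F w • R w) z ∧
      I • fderiv ℝ (fun w => F w • R w) z 1 - fderiv ℝ (fun w => F w • R w) z I =
        (2 * I) • dbar F z • R z := by
    intro z
    by_cases hz : z ∈ ofReal '' S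
    · obtain ⟨x, hx, rfl⟩ := hz
      have hzero := ((hflat x hx).smul_of_isTemperateAt (htemp x hx)).hasFDerivAt_zero
      have hdbar0 : dbar F x = 0 := (hdbar x hx).eventually_eq_zero.self_of_nhds (ofReal_im x)
      exact ⟨hzero.differentiableAt, by simp [hzero.fderiv, hdbar0]⟩
    · have hFz : DifferentiableAt ℝ F z := hF.differentiable one_ne_zero z
      exact ⟨hFz.smul ((hR z hz).restrictScalars ℝ),
        I_smul_fderiv_one_sub_fderiv_I_smul hFz (hR z hz)⟩
  have hint : Integrable fun z => dbar F z • R z :=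
    hcont.integrable_of_hasCompactSupport (hasCompactSupport_dbar hsupp).smul_right
  have hgreen := integral_I_smul_fderiv_one_sub_fderiv_I_eq_zero (fun z => (hderiv z).1)
    hsupp.smul_right (by simpa only [(hderiv _).2] using hint.fun_smul (2 * I))
  simp only [(hderiv _).2, integral_smul] at hgreen
  exact (smul_eq_zero.1 hgreen).resolve_left (by simp)

section Resolvent

variable {B : Type*} [NormedAddCommGroup B] [NormedSpace ℂ B] {P : B →L[ℂ] B}

theorem res_eq_resolvent : res P = resolvent P := by
  ext1 z
  rw [res, resolvent, Algebra.algebraMap_eq_smul_one]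

theorem differentiableAt_res [CompleteSpace B] {z : ℂ} (hz : z ∉ spectrum ℂ P) :
    DifferentiableAt ℂ (res P) z := by
  rw [res_eq_resolvent]
  exact (spectrum.hasDerivAt_resolvent_const_left (not_not.1 hz)).differentiableAt

theorem isTemperateAt_res (hres : TemperateResolventLoc P) (x : ℝ) : IsTemperateAt (res P) x := by
  obtain ⟨C, N, hC, -, hbound⟩ := hres (‖(x : ℂ)‖ + 1) (by positivity)
  refine ⟨⌈N⌉₊, IsBigO.of_bound C ?_⟩
  have hnorm : ∀ᶠ z : ℂ in 𝓝 (x : ℂ), ‖z‖ < ‖(x : ℂ)‖ + 1 :=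
    continuous_norm.continuousAt.eventually_lt_const (lt_add_one _)
  have him : ∀ᶠ z : ℂ in 𝓝 (x : ℂ), |z.im| < 1 :=
    (by fun_prop : Continuous fun z : ℂ => |z.im|).continuousAt.eventually_lt_const (by simp)
  filter_upwards [self_mem_nhdsWithin, nhdsWithin_le_nhds hnorm, nhdsWithin_le_nhds him]
    with z hz hz_norm hz_im
  calc ‖res P z‖ ≤ C * |z.im| ^ (-N) := hbound z hz hz_norm.le
    _ ≤ C * |z.im| ^ (-(⌈N⌉₊ : ℝ)) := by
      gcongr ?_ * ?_
      exact Real.rpow_le_rpow_of_exponent_ge (abs_pos.2 hz) hz_im.le (neg_le_neg (Nat.le_ceil N))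
    _ = C * ‖(z.im ^ ⌈N⌉₊)⁻¹‖ := by
      rw [Real.rpow_neg (abs_nonneg _), Real.rpow_natCast, norm_inv, norm_pow, norm_eq_abs]

end Resolvent

namespace IsAHExt

variable {f : ℝ → ℂ} {F : ℂ → ℂ}

theorem isFlatAt_dbar (hF : IsAHExt f F) (x : ℝ) : IsFlatAt (dbar F) x := by
  obtain ⟨-, -, -, hdbar⟩ := hF
  intro N
  obtain ⟨C, hC⟩ := hdbar N
  exact IsBigO.of_bound C (Eventually.of_forall fun z => by simpa using hC z)

theorem isFlatAt_of_notMem_tsupport (hF : IsAHExt f F) {x : ℝ} (hx : x ∉ tsupport f) :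
    IsFlatAt F x := by
  refine isFlatAt_of_isFlatAt_dbar hF.1 (hF.isFlatAt_dbar x) ?_
  have hre : Tendsto re (𝓝 (x : ℂ)) (𝓝 x) := continuous_re.tendsto' _ _ (ofReal_re x)
  filter_upwards [hre.eventually (notMem_tsupport_iff_eventuallyEq.1 hx)] with z hz him
  have hz_re : (z.re : ℂ) = z := Complex.ext rfl him.symm
  rw [← hz_re, hF.2.2.1, hz, Pi.zero_apply]

end IsAHExt

/-- Example 3, first half: if `supp f` is disjoint from `σ(P)` then `f(P) = 0`. -/
theorem vanishing_off_spectrum {B : Type*} [NormedAddCommGroup B] [NormedSpace ℂ B]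
    [CompleteSpace B] (P : B →L[ℂ] B)
    (hspec : RealSpectrum P) (hres : TemperateResolventLoc P)
    (f : ℝ → ℂ) (hf_smooth : ContDiff ℝ (⊤ : ℕ∞) f) (hf_supp : HasCompactSupport f)
    (hdisj : ∀ x ∈ tsupport f, (x : ℂ) ∉ spectrum ℂ P)
    (F : ℂ → ℂ) (hF : IsAHExt f F) :
    (-(1/(π:ℂ))) • ∫ z : ℂ, dbar F z • res P z = 0 := by
  have hvanish : ∫ z, dbar F z • res P z = 0 := by
    refine integral_dbar_smul_eq_zero (S := {x | (x : ℂ) ∈ spectrum ℂ P})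
      (hF.1.of_le (mod_cast le_top)) hF.2.1 ?_ (fun x _ => isTemperateAt_res hres x) ?_
      (fun x _ => hF.isFlatAt_dbar x)
    · intro z hz
      refine differentiableAt_res fun hz_spec => hz ?_
      have hz_re : (z.re : ℂ) = z := Complex.ext rfl (hspec z hz_spec).symm
      exact ⟨z.re, by rwa [Set.mem_ofPred_eq, hz_re], hz_re⟩
    · exact fun x hx => hF.isFlatAt_of_notMem_tsupport fun hx_supp => hdisj x hx_supp hx
  rw [hvanish, smul_zero]
end
end
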